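/- Let d ≥ 1 and let k ≥ 2 be an integer. If a subset N of ℝ^d is a C^1 submanifold of ℝ^d and N is C^k homogeneous, then N is a C^k submanifold of ℝ^d. -/

import Mathlib

open Metric Set

noncomputable section

/-- `ℝ^d` as a Euclidean space. -/
abbrev Euc (d : ℕ) := EuclideanSpace ℝ (Fin d)

/-- `H` is a `C^k` diffeomorphism from the open set `U` onto the open set `V`,
with inverse `H'`. -/
def IsCkDiffeoOn {E F : Type*} [NormedAddCommGroup E] [NormedSpace ℝ E]
    [NormedAddCommGroup F] [NormedSpace ℝ F]
    (k : ℕ) (H : E → F) (H' : F → E) (U : Set E) (V : Set F) : Prop :=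
  IsOpen U ∧ IsOpen V ∧ ContDiffOn ℝ k H U ∧ ContDiffOn ℝ k H' V ∧
    Set.MapsTo H U V ∧ Set.MapsTo H' V U ∧
    (∀ x ∈ U, H' (H x) = x) ∧ (∀ y ∈ V, H (H' y) = y)

/-- `N` is `C^k` homogeneous in `E`: any point of `N` can be taken to any other point of `N`
by a `C^k` diffeomorphism between open neighborhoods preserving `N`. -/
def CkHomogeneous {E : Type*} [NormedAddCommGroup E] [NormedSpace ℝ E]
    (k : ℕ) (N : Set E) : Prop :=
  ∀ x ∈ N, ∀ y ∈ N, ∃ (U V : Set E) (H H' : E → E),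
    IsCkDiffeoOn k H H' U V ∧ x ∈ U ∧ y ∈ V ∧ H x = y ∧ H '' (N ∩ U) = N ∩ V

/-- `N ⊆ ℝ^d` is a `C^k` submanifold of `ℝ^d`: near each of its points, `N` can be
straightened to a coordinate plane `ℝ^j × {0}` by a `C^k` diffeomorphism. -/
def IsCkSubmanifold (k d : ℕ) (N : Set (Euc d)) : Prop :=
  ∀ p ∈ N, ∃ (U V : Set (Euc d)) (φ φ' : Euc d → Euc d) (j : ℕ),
    IsCkDiffeoOn k φ φ' U V ∧ p ∈ U ∧
    φ '' (N ∩ U) = V ∩ {x : Euc d | ∀ i : Fin d, j ≤ (i : ℕ) → x i = 0}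

/-!
Near a point the submanifold is the graph of a `C¹` map `f`. Let
`R_x(z) = f z - f x - Df_x (z - x)`, and call a covector `η` touching at `x` if `η ∘ R_x` is bounded
above by `O(|z - x|²)`.

* Sliding paraboloids shows that each `η` is touching at a dense set of points. An ambient `C²`
  diffeomorphism preserving the graph changes `R_x` by a linear isomorphism up to `O(|z - x|²)`, so
  by homogeneity the touching covectors span a space of constant dimension. By Baire this span
  admits a frame with uniform constants over some open set; being in the span is then a closed
  condition that holds densely, so the span is the whole dual.
* Hence at every point `|R_x| ≤ η ∘ R_x + O(|z - x|²)` for some `η`, by Baire with the same `η` over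
  some open set. This `η` is touching somewhere there, so `R_x = O(|z - x|²)` at one point, and by
  homogeneity at all.
* By Baire the constant in the `O` is uniform over some open set, where `Df` is then Lipschitz. By
  Rademacher's theorem `Df` is differentiable somewhere, so by homogeneity everywhere. Being
  differentiable, the `1`-jet `z ↦ (f z, Df_z)` is strictly differentiable somewhere (Baire again),
  so by homogeneity everywhere, and it is `C¹`.
* A diffeomorphism preserving the graph of `f` acts on the graph of the `1`-jet with one derivative
  less, so that graph is `C^{k-1}` homogeneous, and induction on `k` concludes.
-/

open Filter Topology Asymptotics

section Baire

theorem isClosed_setOf_exists_mem_of_isCompact {X T : Type*} [TopologicalSpace X]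
    [TopologicalSpace T] {K : Set T} (hK : IsCompact K) {Q : Set (X × T)} (hQ : IsClosed Q) :
    IsClosed {x | ∃ t ∈ K, (x, t) ∈ Q} := by
  have : CompactSpace K := isCompact_iff_compactSpace.1 hK
  have hproj : IsClosed (Prod.fst '' {a : X × K | (a.1, (a.2 : T)) ∈ Q}) :=
    isClosedMap_fst_of_compactSpace _ (hQ.preimage (by fun_prop))
  convert hproj using 1
  ext x
  simp

variable {X T ι : Type*} [PseudoMetricSpace X] [BaireSpace X] [TopologicalSpace T] [Countable ι]

theorem exists_isOpen_forall_of_forall_eventually {W : Set X} (hW : IsOpen W) (hne : W.Nonempty)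
    {K : ι → Set T} (hK : ∀ i, IsCompact (K i)) {p : ι → X → T → X → Prop}
    (hp : ∀ i, ∀ z ∈ W, IsClosed {a : W × T | p i a.1 a.2 z})
    (hev : ∀ x ∈ W, ∃ i, ∃ t ∈ K i, ∀ᶠ z in 𝓝 x, p i x t z) :
    ∃ i, ∃ V ⊆ W, IsOpen V ∧ V.Nonempty ∧ ∀ x ∈ V, ∃ t ∈ K i, ∀ z ∈ V, p i x t z := by
  have : BaireSpace W := hW.baireSpace
  have : Nonempty W := hne.to_subtype
  let F (j : ι × ℕ) : Set W :=
    {x | ∃ t ∈ K j.1, ∀ z ∈ W, dist z (x : X) < 1 / ((j.2 : ℝ) + 1) → p j.1 x t z}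
  have hF_closed (j : ι × ℕ) : IsClosed (F j) := by
    refine isClosed_setOf_exists_mem_of_isCompact (hK j.1)
      (Q := {a : W × T | ∀ z ∈ W, dist z (a.1 : X) < 1 / ((j.2 : ℝ) + 1) → p j.1 a.1 a.2 z}) ?_
    simp only [ofPred_forall]
    exact isClosed_biInter fun z hz =>
      isClosed_imp (isOpen_lt (by fun_prop) continuous_const) (hp j.1 z hz)
  have hF_cover : ⋃ j, F j = univ := by
    refine eq_univ_of_forall fun x => ?_
    obtain ⟨i, t, ht, hpx⟩ := hev x x.2
    obtain ⟨ε, hε, hball⟩ := Metric.eventually_nhds_iff.1 hpx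
    obtain ⟨n, hn⟩ := exists_nat_one_div_lt hε
    exact mem_iUnion.2 ⟨(i, n), t, ht, fun z _ hz => hball (hz.trans hn)⟩
  obtain ⟨⟨i, n⟩, x₀, hx₀⟩ := nonempty_interior_of_iUnion_of_closed hF_closed hF_cover
  set r : ℝ := 1 / ((n : ℝ) + 1)
  have hr : 0 < r := Nat.one_div_pos_of_nat
  refine ⟨i, (↑) '' interior (F (i, n)) ∩ ball (x₀ : X) (r / 2), ?_, ?_, ?_, ?_⟩
  · rintro _ ⟨⟨x, -, rfl⟩, -⟩
    exact x.2
  · exact (hW.isOpenMap_subtype_val _ isOpen_interior).inter isOpen_ball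
  · exact ⟨x₀, mem_image_of_mem _ hx₀, mem_ball_self (half_pos hr)⟩
  · rintro _ ⟨⟨x, hx, rfl⟩, hxr⟩
    obtain ⟨t, ht, hpt⟩ := interior_subset hx
    refine ⟨t, ht, ?_⟩
    rintro _ ⟨⟨z, -, rfl⟩, hzr⟩
    refine hpt z z.2 ?_
    linarith [dist_triangle_right (z : X) x x₀, mem_ball.1 hzr, mem_ball.1 hxr]

theorem exists_isOpen_forall_mem_of_forall_eventually {W : Set X} (hW : IsOpen W)
    (hne : W.Nonempty) {p : ι → X → X → Prop} (hp : ∀ i, ∀ z ∈ W, IsClosed {x : W | p i x z})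
    (hev : ∀ x ∈ W, ∃ i, ∀ᶠ z in 𝓝 x, p i x z) :
    ∃ i, ∃ V ⊆ W, IsOpen V ∧ V.Nonempty ∧ ∀ x ∈ V, ∀ z ∈ V, p i x z := by
  obtain ⟨i, V, hVW, hV, hVne, hpV⟩ := exists_isOpen_forall_of_forall_eventually hW hne
    (K := fun _ : ι => (univ : Set Unit)) (fun _ => isCompact_univ) (p := fun i x _ z => p i x z)
    (fun i z hz => (hp i z hz).preimage continuous_fst)
    (fun x hx => (hev x hx).imp fun _ h => ⟨(), mem_univ _, h⟩)
  exact ⟨i, V, hVW, hV, hVne, fun x hx => (hpV x hx).elim fun _ h => h.2⟩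

end Baire

section TaylorRemainder

variable {X Y Z : Type*} [NormedAddCommGroup X] [NormedSpace ℝ X] [NormedAddCommGroup Y]
  [NormedSpace ℝ Y] [NormedAddCommGroup Z] [NormedSpace ℝ Z]

/-- The remainder at `z` of the first order Taylor expansion of `f` at `x`. -/
def taylorRemainder (f : X → Y) (x z : X) : Y := f z - f x - fderiv ℝ f x (z - x)

theorem taylorRemainder_clm_comp (η : Y →L[ℝ] Z) {f : X → Y} {x : X}
    (hf : DifferentiableAt ℝ f x) (z : X) :
    taylorRemainder (fun y => η (f y)) x z = η (taylorRemainder f x z) := by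
  have hderiv : HasFDerivAt (fun y => η (f y)) (η.comp (fderiv ℝ f x)) x :=
    η.hasFDerivAt.comp x hf.hasFDerivAt
  simp [taylorRemainder, hderiv.fderiv]

theorem continuous_taylorRemainder_subtype {f : X → Y} {W : Set X} (hW : IsOpen W)
    (hf : ContDiffOn ℝ 1 f W) (z : X) : Continuous fun x : W => taylorRemainder f x z := by
  have hf_cont : Continuous fun x : W => f x := hf.continuousOn.domRestrict
  have hderiv_cont : Continuous fun x : W => fderiv ℝ f x :=
    (hf.continuousOn_fderiv_of_isOpen hW le_rfl).domRestrict
  exact (continuous_const.sub hf_cont).sub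
    (hderiv_cont.clm_apply (continuous_const.sub continuous_subtype_val))

theorem eventually_differentiableAt_of_contDiffAt {f : X → Y} {x : X} (hf : ContDiffAt ℝ 1 f x) :
    ∀ᶠ z in 𝓝 x, DifferentiableAt ℝ f z :=
  (hf.eventually (by simp)).mono fun _ hz => hz.differentiableAt one_ne_zero

theorem taylorRemainder_isBigO_sq {f : X → Y} {x : X} (hf : ContDiffAt ℝ 2 f x) :
    taylorRemainder f x =O[𝓝 x] fun z => ‖z - x‖ ^ 2 := by
  obtain ⟨K, t, ht, hK⟩ :=
    (hf.fderiv_right (m := 1) one_add_one_eq_two.le).exists_lipschitzOnWith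
  have hdiff := eventually_differentiableAt_of_contDiffAt (hf.of_le one_le_two)
  obtain ⟨ε, hε, hball⟩ := Metric.eventually_nhds_iff.1 (hdiff.and ht)
  refine .of_bound K ?_
  filter_upwards [ball_mem_nhds x hε] with z hz
  have hsub (y : X) (hy : y ∈ closedBall x ‖z - x‖) : DifferentiableAt ℝ f y ∧ y ∈ t :=
    hball ((mem_closedBall.1 hy).trans_lt (by rwa [← dist_eq_norm]))
  have hderiv_le (y : X) (hy : y ∈ closedBall x ‖z - x‖) :
      ‖fderiv ℝ f y - fderiv ℝ f x‖ ≤ K * ‖z - x‖ :=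
    (hK.norm_sub_le (hsub y hy).2 (mem_of_mem_nhds ht)).trans
      (mul_le_mul_of_nonneg_left (mem_closedBall_iff_norm.1 hy) K.2)
  calc ‖taylorRemainder f x z‖ ≤ K * ‖z - x‖ * ‖z - x‖ :=
        (convex_closedBall x ‖z - x‖).norm_image_sub_le_of_norm_fderiv_le'
          (fun y hy => (hsub y hy).1) hderiv_le (mem_closedBall_self (norm_nonneg _))
          (mem_closedBall_iff_norm.2 le_rfl)
    _ = K * ‖‖z - x‖ ^ 2‖ := by rw [norm_pow, norm_norm]; ring

/-- The covectors `η` for which the graph of `η ∘ f` is touched from above at `x` by a paraboloid: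
`η ∘ f` lies, up to `O(‖z - x‖²)`, below its affine approximation at `x`. -/
def touchingCone (f : X → Y) (x : X) : PointedCone ℝ (Y →L[ℝ] ℝ) where
  carrier := {η | ∃ C : ℝ, ∀ᶠ z in 𝓝 x, η (taylorRemainder f x z) ≤ C * ‖z - x‖ ^ 2}
  add_mem' := by
    rintro η ζ ⟨C, hC⟩ ⟨D, hD⟩
    refine ⟨C + D, ?_⟩
    filter_upwards [hC, hD] with z hη hζ
    rw [add_apply, add_mul]
    exact add_le_add hη hζ
  zero_mem' := ⟨0, by simp⟩
  smul_mem' := by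
    rintro c η ⟨C, hC⟩
    refine ⟨c * C, ?_⟩
    filter_upwards [hC] with z hη
    rw [mul_assoc]
    exact mul_le_mul_of_nonneg_left hη c.2

end TaylorRemainder

section Touching

variable {X Y : Type*} [NormedAddCommGroup X] [NormedAddCommGroup Y] [NormedSpace ℝ Y]

theorem exists_isLocalMin_mul_norm_sub_sq_sub [ProperSpace X] {u : X → ℝ} {a : X} {r : ℝ}
    (hr : 0 < r) (hu : ContinuousOn u (closedBall a r)) :
    ∃ K : ℝ, ∃ x ∈ ball a r, IsLocalMin (fun z => K * ‖z - a‖ ^ 2 - u z) x := by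
  have ha : a ∈ closedBall a r := mem_closedBall_self hr.le
  obtain ⟨b, -, hb⟩ := (isCompact_closedBall a r).exists_isMaxOn ⟨a, ha⟩ hu
  refine ⟨(u b - u a + 1) / r ^ 2,
    exists_isLocalMin_mem_ball (ContinuousOn.sub (by fun_prop) hu) ha fun z hz => ?_⟩
  have hzb : u z ≤ u b := hb (sphere_subset_closedBall hz)
  rw [mem_sphere_iff_norm.1 hz, div_mul_cancel₀ _ (by positivity)]
  simp only [sub_self, norm_zero, ne_eq, OfNat.ofNat_ne_zero, not_false_eq_true, zero_pow,
    mul_zero, zero_sub]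
  linarith

variable [InnerProductSpace ℝ X]

theorem eventually_taylorRemainder_le_of_isLocalMin {u : X → ℝ} {x a : X} {K : ℝ}
    (hu : DifferentiableAt ℝ u x) (hmin : IsLocalMin (fun z => K * ‖z - a‖ ^ 2 - u z) x) :
    ∀ᶠ z in 𝓝 x, taylorRemainder u x z ≤ K * ‖z - x‖ ^ 2 := by
  have hderiv : HasFDerivAt (fun z => K * ‖z - a‖ ^ 2 - u z)
      (K • 2 • innerSL ℝ (x - a) - fderiv ℝ u x) x :=
    (((hasFDerivAt_id x).sub_const a).norm_sq.const_mul K).sub hu.hasFDerivAt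
  have hcrit (v : X) : fderiv ℝ u x v = K * (2 * inner ℝ (x - a) v) := by
    rw [← sub_eq_zero.1 (hmin.hasFDerivAt_eq_zero hderiv)]
    simp only [smul_apply, innerSL_apply_apply, nsmul_eq_mul, smul_eq_mul, Nat.cast_ofNat]
  filter_upwards [hmin] with z hz
  have hexpand : ‖z - a‖ ^ 2 = ‖x - a‖ ^ 2 + 2 * inner ℝ (x - a) (z - x) + ‖z - x‖ ^ 2 := by
    rw [← norm_add_sq_real, sub_add_sub_cancel']
  rw [hexpand] at hz
  rw [taylorRemainder, hcrit]
  linarith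

theorem exists_mem_touchingCone [ProperSpace X] {f : X → Y} {V : Set X} (hV : IsOpen V)
    (hne : V.Nonempty) (hf : DifferentiableOn ℝ f V) (η : Y →L[ℝ] ℝ) :
    ∃ x ∈ V, η ∈ touchingCone f x := by
  obtain ⟨a, ha⟩ := hne
  obtain ⟨r, hr, hball⟩ := nhds_basis_closedBall.mem_iff.1 (hV.mem_nhds ha)
  obtain ⟨K, x, hx, hmin⟩ := exists_isLocalMin_mul_norm_sub_sq_sub hr
    (η.continuous.comp_continuousOn (hf.continuousOn.mono hball))
  have hxV : x ∈ V := hball (ball_subset_closedBall hx)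
  have hfx : DifferentiableAt ℝ f x := hf.differentiableAt (hV.mem_nhds hxV)
  refine ⟨x, hxV, K, ?_⟩
  simpa only [taylorRemainder_clm_comp η hfx] using
    eventually_taylorRemainder_le_of_isLocalMin
      (u := fun z => η (f z)) (η.differentiableAt.comp x hfx) hmin

end Touching

section GraphSlope

variable {X Y : Type*} [NormedAddCommGroup X] [NormedSpace ℝ X] [NormedAddCommGroup Y]
  [NormedSpace ℝ Y]

/-- The endomorphism of the base induced by the restriction of `D` to the graph of `u`. -/
def graphBase (D : X × Y →L[ℝ] X × Y) (u : X →L[ℝ] Y) : X →L[ℝ] X :=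
  (ContinuousLinearMap.fst ℝ X Y).comp (D.comp ((ContinuousLinearMap.id ℝ X).prod u))

/-- The linear map whose graph is the image under `D` of the graph of `u`; it is only meaningful
when `graphBase D u` is invertible. -/
def graphSlope (D : X × Y →L[ℝ] X × Y) (u : X →L[ℝ] Y) : X →L[ℝ] Y :=
  ((ContinuousLinearMap.snd ℝ X Y).comp (D.comp ((ContinuousLinearMap.id ℝ X).prod u))).comp
    (graphBase D u).inverse

variable {D D' : X × Y →L[ℝ] X × Y} {u u' : X →L[ℝ] Y}

theorem graphBase_apply (v : X) : graphBase D u v = (D (v, u v)).1 := rfl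

theorem graphSlope_graphBase (hinv : (graphBase D u).IsInvertible) (v : X) :
    graphSlope D u (graphBase D u v) = (D (v, u v)).2 := by
  simp [graphSlope, hinv.inverse_apply_self]

theorem graphSlope_eq (hinv : (graphBase D u).IsInvertible)
    (hmap : ∀ v, (D (v, u v)).2 = u' (D (v, u v)).1) : graphSlope D u = u' := by
  ext v
  obtain ⟨w, rfl⟩ := hinv.surjective v
  rw [graphSlope_graphBase hinv, hmap, graphBase_apply]

theorem graphBase_graphBase (hleft : ∀ w, D' (D w) = w)
    (hmap : ∀ v, (D (v, u v)).2 = u' (D (v, u v)).1) (v : X) :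
    graphBase D' u' (graphBase D u v) = v := by
  rw [graphBase_apply, graphBase_apply, ← hmap, Prod.mk.eta, hleft]

theorem graphSlope_graphSlope (hinv : (graphBase D u).IsInvertible) (hleft : ∀ w, D' (D w) = w) :
    graphSlope D' (graphSlope D u) = u := by
  have hmap (v : X) : (D (v, u v)).2 = graphSlope D u (D (v, u v)).1 :=
    (graphSlope_graphBase hinv v).symm
  have hbase := graphBase_graphBase hleft hmap
  have hinv' : graphBase D' (graphSlope D u) = (graphBase D u).inverse := by
    ext v
    obtain ⟨w, rfl⟩ := hinv.surjective v
    rw [hbase, hinv.inverse_apply_self]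
  refine graphSlope_eq (hinv' ▸ hinv.inverse) fun v => ?_
  obtain ⟨w, rfl⟩ := hinv.surjective v
  rw [graphSlope_graphBase hinv, graphBase_apply, Prod.mk.eta, hleft]

variable (X Y) in
theorem contDiff_comp_id_prod {n : WithTop ℕ∞} :
    ContDiff ℝ n fun a : (X × Y →L[ℝ] X × Y) × (X →L[ℝ] Y) =>
      a.1.comp ((ContinuousLinearMap.id ℝ X).prod a.2) := by
  have hprod (u : X →L[ℝ] Y) : (ContinuousLinearMap.id ℝ X).prod u =
      ContinuousLinearMap.inl ℝ X Y + (ContinuousLinearMap.inr ℝ X Y).comp u := by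
    ext v <;> simp
  simp only [hprod]
  exact contDiff_fst.clm_comp (contDiff_const.add (contDiff_const.clm_comp contDiff_snd))

variable (X Y) in
theorem contDiff_graphBase {n : WithTop ℕ∞} :
    ContDiff ℝ n fun a : (X × Y →L[ℝ] X × Y) × (X →L[ℝ] Y) => graphBase a.1 a.2 :=
  contDiff_const.clm_comp (contDiff_comp_id_prod X Y)

theorem contDiffAt_graphSlope [CompleteSpace X] {n : WithTop ℕ∞}
    (hinv : (graphBase D u).IsInvertible) :
    ContDiffAt ℝ n (fun a : (X × Y →L[ℝ] X × Y) × (X →L[ℝ] Y) => graphSlope a.1 a.2) (D, u) :=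
  (contDiff_const.clm_comp (contDiff_comp_id_prod X Y)).contDiffAt.clm_comp
    ((hinv.contDiffAt_map_inverse (n := n)).comp (D, u) (contDiff_graphBase X Y).contDiffAt)

theorem eventually_isInvertible_graphBase [CompleteSpace X]
    (hinv : (graphBase D u).IsInvertible) :
    ∀ᶠ a : (X × Y →L[ℝ] X × Y) × (X →L[ℝ] Y) in 𝓝 (D, u), (graphBase a.1 a.2).IsInvertible :=
  (contDiff_graphBase X Y (n := 0)).continuous.continuousAt.eventually
    (ContinuousLinearEquiv.isOpen.mem_nhds hinv)

end GraphSlope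

section Prolongation

variable {X Y : Type*} [NormedAddCommGroup X] [NormedSpace ℝ X] [NormedAddCommGroup Y]
  [NormedSpace ℝ Y]

/-- The first jet of `f`, without its base point. -/
def oneJet (f : X → Y) (z : X) : Y × (X →L[ℝ] Y) := (f z, fderiv ℝ f z)

/-- The prolongation of `H` to first jets: a jet `(a, b, u)` is read as the graph of slope `u`
through `(a, b)`, on which `H` acts through its derivative. -/
def prolong (H : X × Y → X × Y) (w : X × (Y × (X →L[ℝ] Y))) : X × (Y × (X →L[ℝ] Y)) :=
  ((H (w.1, w.2.1)).1, ((H (w.1, w.2.1)).2, graphSlope (fderiv ℝ H (w.1, w.2.1)) w.2.2))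

variable {H H' : X × Y → X × Y} {f : X → Y} {a z : X} {b : Y} {u : X →L[ℝ] Y}

theorem fderiv_fderiv_of_left_inverse {E F : Type*} [NormedAddCommGroup E] [NormedSpace ℝ E]
    [NormedAddCommGroup F] [NormedSpace ℝ F] {H : E → F} {H' : F → E} {p : E}
    (hH : DifferentiableAt ℝ H p) (hH' : DifferentiableAt ℝ H' (H p))
    (hleft : ∀ᶠ w in 𝓝 p, H' (H w) = w) (v : E) :
    fderiv ℝ H' (H p) (fderiv ℝ H p v) = v := by
  have hcomp : HasFDerivAt (fun w => H' (H w)) ((fderiv ℝ H' (H p)).comp (fderiv ℝ H p)) p :=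
    hH'.hasFDerivAt.comp p hH.hasFDerivAt
  exact DFunLike.congr_fun (hcomp.unique ((hasFDerivAt_id p).congr_of_eventuallyEq hleft)) v

theorem hasFDerivAt_comp_graph (hH : DifferentiableAt ℝ H (z, f z)) (hf : DifferentiableAt ℝ f z) :
    HasFDerivAt (fun y => H (y, f y))
      ((fderiv ℝ H (z, f z)).comp ((ContinuousLinearMap.id ℝ X).prod (fderiv ℝ f z))) z :=
  HasFDerivAt.comp (f := fun y => (y, f y)) z hH.hasFDerivAt
    ((hasFDerivAt_id z).prodMk hf.hasFDerivAt)

theorem snd_fderiv_eq_of_map_graph (hH : DifferentiableAt ℝ H (z, f z))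
    (hf : DifferentiableAt ℝ f z) (hf' : DifferentiableAt ℝ f (H (z, f z)).1)
    (hgraph : ∀ᶠ y in 𝓝 z, (H (y, f y)).2 = f (H (y, f y)).1) (v : X) :
    (fderiv ℝ H (z, f z) (v, fderiv ℝ f z v)).2 =
      fderiv ℝ f (H (z, f z)).1 (fderiv ℝ H (z, f z) (v, fderiv ℝ f z v)).1 := by
  have hderiv := hasFDerivAt_comp_graph hH hf
  have hcomp := HasFDerivAt.comp (f := fun y => (H (y, f y)).1) z hf'.hasFDerivAt hderiv.fst
  exact DFunLike.congr_fun (hderiv.snd.unique (hcomp.congr_of_eventuallyEq hgraph)) v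

theorem prolong_oneJet (hH : DifferentiableAt ℝ H (z, f z)) (hf : DifferentiableAt ℝ f z)
    (hf' : DifferentiableAt ℝ f (H (z, f z)).1)
    (hgraph : ∀ᶠ y in 𝓝 z, (H (y, f y)).2 = f (H (y, f y)).1)
    (hinv : (graphBase (fderiv ℝ H (z, f z)) (fderiv ℝ f z)).IsInvertible) :
    prolong H (z, oneJet f z) = ((H (z, f z)).1, oneJet f (H (z, f z)).1) := by
  simp only [prolong, oneJet, hgraph.self_of_nhds,
    graphSlope_eq hinv (snd_fderiv_eq_of_map_graph hH hf hf' hgraph)]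

theorem prolong_prolong (hH : DifferentiableAt ℝ H (a, b)) (hH' : DifferentiableAt ℝ H' (H (a, b)))
    (hleft : ∀ᶠ w in 𝓝 (a, b), H' (H w) = w)
    (hinv : (graphBase (fderiv ℝ H (a, b)) u).IsInvertible) :
    prolong H' (prolong H (a, (b, u))) = (a, (b, u)) := by
  simp only [prolong, Prod.mk.eta, hleft.self_of_nhds,
    graphSlope_graphSlope hinv (fderiv_fderiv_of_left_inverse hH hH' hleft)]

theorem contDiffAt_prolong [CompleteSpace X] {n : WithTop ℕ∞} (hH : ContDiffAt ℝ (n + 1) H (a, b))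
    (hinv : (graphBase (fderiv ℝ H (a, b)) u).IsInvertible) :
    ContDiffAt ℝ n (prolong H) (a, (b, u)) := by
  have hproj : ContDiffAt ℝ n (fun w : X × (Y × (X →L[ℝ] Y)) => (w.1, w.2.1)) (a, (b, u)) := by
    fun_prop
  have hHproj : ContDiffAt ℝ n (fun w : X × (Y × (X →L[ℝ] Y)) => H (w.1, w.2.1)) (a, (b, u)) :=
    (hH.of_le le_self_add).comp (a, (b, u)) hproj
  have hderiv : ContDiffAt ℝ n
      (fun w : X × (Y × (X →L[ℝ] Y)) => (fderiv ℝ H (w.1, w.2.1), w.2.2)) (a, (b, u)) :=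
    ((hH.fderiv_right le_rfl).comp (a, (b, u)) hproj).prodMk (by fun_prop)
  have hslope : ContDiffAt ℝ n
      (fun w : X × (Y × (X →L[ℝ] Y)) => graphSlope (fderiv ℝ H (w.1, w.2.1)) w.2.2)
      (a, (b, u)) :=
    ContDiffAt.comp (g := fun c : (X × Y →L[ℝ] X × Y) × (X →L[ℝ] Y) => graphSlope c.1 c.2)
      (a, (b, u)) (contDiffAt_graphSlope hinv) hderiv
  exact hHproj.fst.prodMk (hHproj.snd.prodMk hslope)

theorem eventually_isInvertible_graphBase_fderiv [CompleteSpace X] (hH : ContDiffAt ℝ 1 H (a, b))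
    (hinv : (graphBase (fderiv ℝ H (a, b)) u).IsInvertible) :
    ∀ᶠ w : X × (Y × (X →L[ℝ] Y)) in 𝓝 (a, (b, u)),
      (graphBase (fderiv ℝ H (w.1, w.2.1)) w.2.2).IsInvertible := by
  have hproj : ContinuousAt (fun w : X × (Y × (X →L[ℝ] Y)) => (w.1, w.2.1)) (a, (b, u)) := by
    fun_prop
  have hderiv : ContinuousAt (fderiv ℝ H) (a, b) :=
    (hH.fderiv_right (m := 0) (zero_add _).le).continuousAt
  have hcont : ContinuousAt
      (fun w : X × (Y × (X →L[ℝ] Y)) => (fderiv ℝ H (w.1, w.2.1), w.2.2)) (a, (b, u)) :=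
    (hderiv.comp (x := (a, (b, u))) hproj).prodMk (by fun_prop)
  exact hcont.eventually (eventually_isInvertible_graphBase hinv)

end Prolongation

section GraphGerm

variable {X Y : Type*} [NormedAddCommGroup X] [NormedSpace ℝ X] [NormedAddCommGroup Y]
  [NormedSpace ℝ Y]

/-- The germ of `H` at the point over `x` of the graph of `f` is of class `C^k`, has the left
inverse `H'`, and maps the graph of `f` to itself and the point over `x` to the point over `x'`. -/
structure IsGraphGermMap (k : ℕ) (f : X → Y) (H H' : X × Y → X × Y) (x x' : X) : Prop where
  contDiffAt : ContDiffAt ℝ k H (x, f x)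
  map_base : H (x, f x) = (x', f x')
  left_inverse : ∀ᶠ w in 𝓝 (x, f x), H' (H w) = w
  map_graph : ∀ᶠ z in 𝓝 x, (H (z, f z)).2 = f (H (z, f z)).1

/-- Some germ of a `C^k` diffeomorphism preserves the graph of `f` and maps its point over `x` to
its point over `x'`. -/
def GraphGermEquiv (k : ℕ) (f : X → Y) (x x' : X) : Prop :=
  ∃ H H', IsGraphGermMap k f H H' x x' ∧ IsGraphGermMap k f H' H x' x

/-- The graph of `f` over `W` is `C^k` homogeneous. -/
def GraphHomogeneousOn (k : ℕ) (f : X → Y) (W : Set X) : Prop :=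
  ∀ x ∈ W, ∀ x' ∈ W, GraphGermEquiv k f x x'

variable {k m : ℕ} {f : X → Y} {H H' : X × Y → X × Y} {x x' : X} {W : Set X}

theorem IsGraphGermMap.of_le (h : IsGraphGermMap k f H H' x x') (hmk : m ≤ k) :
    IsGraphGermMap m f H H' x x' :=
  { h with contDiffAt := h.contDiffAt.of_le (mod_cast hmk) }

theorem GraphHomogeneousOn.of_le (h : GraphHomogeneousOn k f W) (hmk : m ≤ k) :
    GraphHomogeneousOn m f W := fun x hx x' hx' =>
  let ⟨H, H', hH, hH'⟩ := h x hx x' hx'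
  ⟨H, H', hH.of_le hmk, hH'.of_le hmk⟩

namespace IsGraphGermMap

theorem tendsto_fst (h : IsGraphGermMap k f H H' x x') (hf : ContinuousAt f x) :
    Tendsto (fun z => (H (z, f z)).1) (𝓝 x) (𝓝 x') := by
  have hcont : ContinuousAt (fun z => (H (z, f z)).1) x :=
    (ContinuousAt.comp (f := fun z => (z, f z)) h.contDiffAt.continuousAt
      (continuousAt_id.prodMk hf)).fst
  simpa only [h.map_base] using hcont.tendsto

theorem eventuallyEq_snd (h : IsGraphGermMap k f H H' x x') (hf : ContinuousAt f x) :
    f =ᶠ[𝓝 x] fun z => (H' ((H (z, f z)).1, f (H (z, f z)).1)).2 := by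
  have hgraph : ContinuousAt (fun z => (z, f z)) x := continuousAt_id.prodMk hf
  filter_upwards [h.map_graph, hgraph.eventually h.left_inverse] with z hz hleft
  rw [← hz, Prod.mk.eta, hleft]

theorem differentiableAt (hk : k ≠ 0) (h : IsGraphGermMap k f H H' x x') :
    DifferentiableAt ℝ H (x, f x) :=
  h.contDiffAt.differentiableAt (mod_cast hk)

theorem fderiv_fderiv (hk : k ≠ 0) (h : IsGraphGermMap k f H H' x x')
    (h' : IsGraphGermMap k f H' H x' x) (w : X × Y) :
    fderiv ℝ H' (x', f x') (fderiv ℝ H (x, f x) w) = w := by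
  rw [← h.map_base]
  exact fderiv_fderiv_of_left_inverse (h.differentiableAt hk)
    (h.map_base ▸ h'.differentiableAt hk) h.left_inverse w

theorem snd_fderiv_eq (hk : k ≠ 0) (h : IsGraphGermMap k f H H' x x')
    (hfx : DifferentiableAt ℝ f x) (hfx' : DifferentiableAt ℝ f x') (v : X) :
    (fderiv ℝ H (x, f x) (v, fderiv ℝ f x v)).2 =
      fderiv ℝ f x' (fderiv ℝ H (x, f x) (v, fderiv ℝ f x v)).1 := by
  have hfst : (H (x, f x)).1 = x' := by rw [h.map_base]
  rw [← hfst]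
  exact snd_fderiv_eq_of_map_graph (h.differentiableAt hk) hfx (hfst ▸ hfx') h.map_graph v

theorem isInvertible_graphBase (hk : k ≠ 0) (h : IsGraphGermMap k f H H' x x')
    (hfx : DifferentiableAt ℝ f x) (hfx' : DifferentiableAt ℝ f x')
    (h' : IsGraphGermMap k f H' H x' x) :
    (graphBase (fderiv ℝ H (x, f x)) (fderiv ℝ f x)).IsInvertible :=
  .of_inverse (g := graphBase (fderiv ℝ H' (x', f x')) (fderiv ℝ f x'))
    (ContinuousLinearMap.ext <|
      graphBase_graphBase (h'.fderiv_fderiv hk h) (h'.snd_fderiv_eq hk hfx' hfx))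
    (ContinuousLinearMap.ext <|
      graphBase_graphBase (h.fderiv_fderiv hk h') (h.snd_fderiv_eq hk hfx hfx'))

end IsGraphGermMap

section Prolong

variable [CompleteSpace X]

theorem eventually_prolong_prolong {a : X} {b : Y} {u : X →L[ℝ] Y} (hH : ContDiffAt ℝ 1 H (a, b))
    (hH' : ContDiffAt ℝ 1 H' (H (a, b))) (hleft : ∀ᶠ w in 𝓝 (a, b), H' (H w) = w)
    (hinv : (graphBase (fderiv ℝ H (a, b)) u).IsInvertible) :
    ∀ᶠ w in 𝓝 (a, (b, u)), prolong H' (prolong H w) = w := by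
  have hproj : ContinuousAt (fun w : X × (Y × (X →L[ℝ] Y)) => (w.1, w.2.1)) (a, (b, u)) := by
    fun_prop
  filter_upwards [hproj.eventually (eventually_differentiableAt_of_contDiffAt hH),
    hproj.eventually (hH.continuousAt.eventually (eventually_differentiableAt_of_contDiffAt hH')),
    hproj.eventually hleft.eventually_nhds,
    eventually_isInvertible_graphBase_fderiv hH hinv] with w hHw hHw' hleftw hinvw
  exact prolong_prolong hHw hHw' hleftw hinvw

namespace IsGraphGermMap

theorem eventually_prolong_oneJet (h : IsGraphGermMap (k + 1) f H H' x x')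
    (h' : IsGraphGermMap (k + 1) f H' H x' x) (hfx : ContDiffAt ℝ 1 f x)
    (hfx' : ContDiffAt ℝ 1 f x') :
    ∀ᶠ z in 𝓝 x, prolong H (z, oneJet f z) = ((H (z, f z)).1, oneJet f (H (z, f z)).1) := by
  have hinv := h.isInvertible_graphBase k.succ_ne_zero (hfx.differentiableAt one_ne_zero)
    (hfx'.differentiableAt one_ne_zero) h'
  have hH : ContDiffAt ℝ 1 H (x, f x) := h.contDiffAt.of_le (mod_cast k.succ_pos)
  have hgraph : ContinuousAt (fun z => (z, f z)) x := continuousAt_id.prodMk hfx.continuousAt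
  have hjet : ContinuousAt (fun z => (z, oneJet f z)) x :=
    continuousAt_id.prodMk
      (hfx.continuousAt.prodMk (hfx.fderiv_right (m := 0) (zero_add _).le).continuousAt)
  filter_upwards [hgraph.eventually (eventually_differentiableAt_of_contDiffAt hH),
    eventually_differentiableAt_of_contDiffAt hfx,
    (h.tendsto_fst hfx.continuousAt).eventually (eventually_differentiableAt_of_contDiffAt hfx'),
    h.map_graph.eventually_nhds,
    hjet.eventually (eventually_isInvertible_graphBase_fderiv hH hinv)]
    with z hHz hfz hfz' hgraphz hinvz
  exact prolong_oneJet hHz hfz hfz' hgraphz hinvz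

theorem prolong (h : IsGraphGermMap (k + 1) f H H' x x')
    (h' : IsGraphGermMap (k + 1) f H' H x' x) (hfx : ContDiffAt ℝ 1 f x)
    (hfx' : ContDiffAt ℝ 1 f x') :
    IsGraphGermMap k (oneJet f) (prolong H) (prolong H') x x' := by
  have hinv := h.isInvertible_graphBase k.succ_ne_zero (hfx.differentiableAt one_ne_zero)
    (hfx'.differentiableAt one_ne_zero) h'
  have hjet := h.eventually_prolong_oneJet h' hfx hfx'
  have hone : (1 : WithTop ℕ∞) ≤ (k + 1 : ℕ) := mod_cast k.succ_pos
  exact {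
    contDiffAt := contDiffAt_prolong h.contDiffAt hinv
    map_base := by rw [hjet.self_of_nhds, h.map_base]
    left_inverse := eventually_prolong_prolong (h.contDiffAt.of_le hone)
      (h.map_base ▸ h'.contDiffAt.of_le hone) h.left_inverse hinv
    map_graph := hjet.mono fun z hz => by rw [hz] }

end IsGraphGermMap

protected theorem GraphHomogeneousOn.oneJet (h : GraphHomogeneousOn (k + 1) f W) (hW : IsOpen W)
    (hf : ContDiffOn ℝ 1 f W) : GraphHomogeneousOn k (oneJet f) W := fun x hx x' hx' =>
  let ⟨H, H', hH, hH'⟩ := h x hx x' hx'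
  have hfx := hf.contDiffAt (hW.mem_nhds hx)
  have hfx' := hf.contDiffAt (hW.mem_nhds hx')
  ⟨prolong H, prolong H', hH.prolong hH' hfx hfx', hH'.prolong hH hfx' hfx⟩

namespace GraphGermEquiv

theorem oneJet_eventuallyEq (h : GraphGermEquiv 2 f x x') (hfx : ContDiffAt ℝ 1 f x)
    (hfx' : ContDiffAt ℝ 1 f x') :
    ∃ (Φ : X × (Y × (X →L[ℝ] Y)) → Y × (X →L[ℝ] Y)) (b : X → X),
      ContDiffAt ℝ 1 Φ (x, oneJet f x) ∧ ContDiffAt ℝ 1 b x' ∧ b x' = x ∧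
        oneJet f =ᶠ[𝓝 x'] fun y => Φ (b y, oneJet f (b y)) := by
  obtain ⟨H, H', hH, hH'⟩ := h
  have hP := hH.prolong hH' hfx hfx'
  have hP' := hH'.prolong hH hfx' hfx
  have hjet : ContinuousAt (oneJet f) x' :=
    hfx'.continuousAt.prodMk (hfx'.fderiv_right (m := 0) (zero_add _).le).continuousAt
  refine ⟨fun w => (prolong H w).2, fun y => (H' (y, f y)).1, hP.contDiffAt.snd, ?_, ?_,
    hP'.eventuallyEq_snd hjet⟩
  · exact ((hH'.contDiffAt.of_le one_le_two).comp (f := fun y => (y, f y)) x'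
      (contDiffAt_id.prodMk hfx')).fst
  · simp only [hH'.map_base]

theorem differentiableAt_oneJet (h : GraphGermEquiv 2 f x x') (hfx : ContDiffAt ℝ 1 f x)
    (hfx' : ContDiffAt ℝ 1 f x') (hjet : DifferentiableAt ℝ (oneJet f) x) :
    DifferentiableAt ℝ (oneJet f) x' := by
  obtain ⟨Φ, b, hΦ, hb, rfl, heq⟩ := h.oneJet_eventuallyEq hfx hfx'
  have hb' : DifferentiableAt ℝ b x' := hb.differentiableAt one_ne_zero
  refine DifferentiableAt.congr_of_eventuallyEq ?_ heq
  exact DifferentiableAt.comp (g := Φ) (f := fun y => (b y, oneJet f (b y))) x'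
    (hΦ.differentiableAt one_ne_zero) (hb'.prodMk (hjet.comp x' hb'))

theorem hasStrictFDerivAt_oneJet (h : GraphGermEquiv 2 f x x') (hfx : ContDiffAt ℝ 1 f x)
    (hfx' : ContDiffAt ℝ 1 f x')
    (hjet : ∃ J : X →L[ℝ] Y × (X →L[ℝ] Y), HasStrictFDerivAt (oneJet f) J x) :
    ∃ J : X →L[ℝ] Y × (X →L[ℝ] Y), HasStrictFDerivAt (oneJet f) J x' := by
  obtain ⟨Φ, b, hΦ, hb, rfl, heq⟩ := h.oneJet_eventuallyEq hfx hfx'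
  obtain ⟨J, hJ⟩ := hjet
  have hb' := hb.hasStrictFDerivAt one_ne_zero
  have hcomp := HasStrictFDerivAt.comp (g := Φ) (f := fun y => (b y, oneJet f (b y))) x'
    (hΦ.hasStrictFDerivAt one_ne_zero) (hb'.prodMk (hJ.comp x' hb'))
  exact ⟨_, hcomp.congr_of_eventuallyEq heq.symm⟩

end GraphGermEquiv

end Prolong

end GraphGerm

section NormalPart

variable {X Y : Type*} [NormedAddCommGroup X] [NormedSpace ℝ X] [NormedAddCommGroup Y]
  [NormedSpace ℝ Y]

/-- The projection onto `Y` along the graph of `u`. -/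
def projAlongGraph (u : X →L[ℝ] Y) : X × Y →L[ℝ] Y :=
  ContinuousLinearMap.snd ℝ X Y - u.comp (ContinuousLinearMap.fst ℝ X Y)

/-- The map induced by `D` between the quotients by the graphs of `u` and `u'`, both identified
with `Y`. -/
def normalPart (D : X × Y →L[ℝ] X × Y) (u' : X →L[ℝ] Y) : Y →L[ℝ] Y :=
  ((projAlongGraph u').comp D).comp (ContinuousLinearMap.inr ℝ X Y)

theorem projAlongGraph_apply (u : X →L[ℝ] Y) (w : X × Y) : projAlongGraph u w = w.2 - u w.1 := rfl

theorem taylorRemainder_eq_projAlongGraph (f : X → Y) (x z : X) :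
    taylorRemainder f x z = projAlongGraph (fderiv ℝ f x) ((z, f z) - (x, f x)) := rfl

variable {D D' : X × Y →L[ℝ] X × Y} {u u' : X →L[ℝ] Y}

theorem normalPart_projAlongGraph (hmap : ∀ v, (D (v, u v)).2 = u' (D (v, u v)).1) (w : X × Y) :
    normalPart D u' (projAlongGraph u w) = projAlongGraph u' (D w) := by
  have hw : w = (w.1, u w.1) + (0, projAlongGraph u w) := by
    ext <;> simp [projAlongGraph_apply]
  have hgraph : projAlongGraph u' (D (w.1, u w.1)) = 0 := sub_eq_zero.2 (hmap w.1)
  conv_rhs => rw [hw, map_add, map_add, hgraph, zero_add]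
  rfl

theorem normalPart_normalPart (hleft : ∀ w, D' (D w) = w)
    (hmap' : ∀ v, (D' (v, u' v)).2 = u (D' (v, u' v)).1) (y : Y) :
    normalPart D' u (normalPart D u' y) = y := by
  have hy : normalPart D u' y = projAlongGraph u' (D (0, y)) := rfl
  rw [hy, normalPart_projAlongGraph hmap', hleft, projAlongGraph_apply, map_zero, sub_zero]

/-- The isomorphism between the quotients by the graphs of `u` and `u'` induced by `D`. -/
def normalPartEquiv (hleft : ∀ w, D' (D w) = w) (hright : ∀ w, D (D' w) = w)
    (hmap : ∀ v, (D (v, u v)).2 = u' (D (v, u v)).1)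
    (hmap' : ∀ v, (D' (v, u' v)).2 = u (D' (v, u' v)).1) : Y ≃L[ℝ] Y :=
  .equivOfInverse (normalPart D u') (normalPart D' u) (normalPart_normalPart hleft hmap')
    (normalPart_normalPart hright hmap)

end NormalPart

section RemainderTransport

variable {X Y : Type*} [NormedAddCommGroup X] [NormedSpace ℝ X] [NormedAddCommGroup Y]
  [NormedSpace ℝ Y] {f : X → Y} {x x' : X}

theorem IsGraphGermMap.normalPart_taylorRemainder_isBigO {H H' : X × Y → X × Y}
    (h : IsGraphGermMap 2 f H H' x x') (hfx : DifferentiableAt ℝ f x)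
    (hfx' : DifferentiableAt ℝ f x') :
    (fun z => normalPart (fderiv ℝ H (x, f x)) (fderiv ℝ f x') (taylorRemainder f x z) -
      taylorRemainder f x' (H (z, f z)).1) =O[𝓝 x] fun z => ‖z - x‖ ^ 2 := by
  have hgraph : HasFDerivAt (fun z => (z, f z))
      ((ContinuousLinearMap.id ℝ X).prod (fderiv ℝ f x)) x :=
    (hasFDerivAt_id x).prodMk hfx.hasFDerivAt
  have hremainder : (fun z => taylorRemainder H (x, f x) (z, f z)) =O[𝓝 x]
      fun z => ‖z - x‖ ^ 2 :=
    ((taylorRemainder_isBigO_sq h.contDiffAt).comp_tendsto hgraph.continuousAt).trans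
      (hgraph.isBigO_sub.norm_norm.pow 2)
  have hproj : (fun z => projAlongGraph (fderiv ℝ f x') (taylorRemainder H (x, f x) (z, f z)))
      =O[𝓝 x] fun z => ‖z - x‖ ^ 2 :=
    (ContinuousLinearMap.isBigO_comp _ _ _).trans hremainder
  refine hproj.neg_left.congr' ?_ .rfl
  filter_upwards [h.map_graph] with z hz
  rw [taylorRemainder_eq_projAlongGraph f x,
    normalPart_projAlongGraph (h.snd_fderiv_eq two_ne_zero hfx hfx'),
    taylorRemainder_eq_projAlongGraph f x', ← hz, Prod.mk.eta, ← map_sub, ← map_neg,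
    taylorRemainder, h.map_base, neg_sub]

namespace GraphGermEquiv

theorem exists_taylorRemainder_isBigO (h : GraphGermEquiv 2 f x x') (hfx : DifferentiableAt ℝ f x)
    (hfx' : DifferentiableAt ℝ f x') :
    ∃ (B : Y ≃L[ℝ] Y) (b : X → X), Tendsto b (𝓝 x) (𝓝 x') ∧
      ((fun z => b z - x') =O[𝓝 x] fun z => z - x) ∧
      (fun z => B (taylorRemainder f x z) - taylorRemainder f x' (b z)) =O[𝓝 x]
        fun z => ‖z - x‖ ^ 2 := by
  obtain ⟨H, H', hH, hH'⟩ := h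
  have hbase := (hasFDerivAt_comp_graph (hH.differentiableAt two_ne_zero) hfx).fst.isBigO_sub
  simp only [hH.map_base] at hbase
  exact ⟨normalPartEquiv (hH.fderiv_fderiv two_ne_zero hH') (hH'.fderiv_fderiv two_ne_zero hH)
      (hH.snd_fderiv_eq two_ne_zero hfx hfx') (hH'.snd_fderiv_eq two_ne_zero hfx' hfx),
    fun z => (H (z, f z)).1, hH.tendsto_fst hfx.continuousAt, hbase,
    hH.normalPart_taylorRemainder_isBigO hfx hfx'⟩

theorem taylorRemainder_isBigO (h : GraphGermEquiv 2 f x x') (hfx : DifferentiableAt ℝ f x)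
    (hfx' : DifferentiableAt ℝ f x')
    (hO : taylorRemainder f x' =O[𝓝 x'] fun z => ‖z - x'‖ ^ 2) :
    taylorRemainder f x =O[𝓝 x] fun z => ‖z - x‖ ^ 2 := by
  obtain ⟨B, b, hb, hbO, hBO⟩ := h.exists_taylorRemainder_isBigO hfx hfx'
  have hO' : (fun z => taylorRemainder f x' (b z)) =O[𝓝 x] fun z => ‖z - x‖ ^ 2 :=
    (hO.comp_tendsto hb).trans (hbO.norm_norm.pow 2)
  exact (B.isBigO_comp_rev _ _).trans ((hBO.add hO').congr_left fun z => sub_add_cancel _ _)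

theorem exists_comp_mem_touchingCone (h : GraphGermEquiv 2 f x x')
    (hfx : DifferentiableAt ℝ f x) (hfx' : DifferentiableAt ℝ f x') :
    ∃ B : Y ≃L[ℝ] Y, ∀ η ∈ touchingCone f x', η.comp (B : Y →L[ℝ] Y) ∈ touchingCone f x := by
  obtain ⟨B, b, hb, hbO, hBO⟩ := h.exists_taylorRemainder_isBigO hfx hfx'
  refine ⟨B, fun η ⟨C, hC⟩ => ?_⟩
  obtain ⟨c, hc⟩ := (hbO.norm_norm.pow 2).bound
  obtain ⟨c', hc'⟩ := ((ContinuousLinearMap.isBigO_comp η _ _).trans hBO).bound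
  refine ⟨|C| * c + c', ?_⟩
  filter_upwards [hb.eventually hC, hc, hc'] with z hCz hcz hcz'
  simp only [norm_pow, norm_norm] at hcz hcz'
  calc η (B (taylorRemainder f x z))
      = η (taylorRemainder f x' (b z)) +
          η (B (taylorRemainder f x z) - taylorRemainder f x' (b z)) := by
        rw [← map_add, add_sub_cancel]
    _ ≤ |C| * (c * ‖z - x‖ ^ 2) + c' * ‖z - x‖ ^ 2 := by
        refine add_le_add (hCz.trans ?_) ((le_abs_self _).trans hcz')
        gcongr
        exact le_abs_self C
    _ = (|C| * c + c') * ‖z - x‖ ^ 2 := by ring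

theorem finrank_span_touchingCone_le [FiniteDimensional ℝ Y] (h : GraphGermEquiv 2 f x x')
    (hfx : DifferentiableAt ℝ f x) (hfx' : DifferentiableAt ℝ f x') :
    Module.finrank ℝ (Submodule.span ℝ (touchingCone f x' : Set (Y →L[ℝ] ℝ))) ≤
      Module.finrank ℝ (Submodule.span ℝ (touchingCone f x : Set (Y →L[ℝ] ℝ))) := by
  obtain ⟨B, hB⟩ := h.exists_comp_mem_touchingCone hfx hfx'
  let T : (Y →L[ℝ] ℝ) ≃ₗ[ℝ] (Y →L[ℝ] ℝ) :=
    (B.symm.arrowCongr (.refl ℝ ℝ)).toLinearEquiv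
  rw [← T.finrank_map_eq, Submodule.map_span]
  refine Submodule.finrank_mono (Submodule.span_mono ?_)
  rintro _ ⟨η, hη, rfl⟩
  exact hB η hη

end GraphGermEquiv

end RemainderTransport

section LinearAlgebra

theorem not_linearIndependent_finCons {K E : Type*} [DivisionRing K] [AddCommGroup E]
    [Module K E] [FiniteDimensional K E] {s : Set E} {r : ℕ}
    (hr : Module.finrank K (Submodule.span K s) = r) {v : Fin r → E} (hv : ∀ j, v j ∈ s) {η : E}
    (hη : η ∈ s) : ¬LinearIndependent K (Fin.cons η v : Fin (r + 1) → E) := fun hli => by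
  have hsub : Submodule.span K (range (Fin.cons η v : Fin (r + 1) → E)) ≤ Submodule.span K s := by
    rw [Fin.range_cons]
    exact Submodule.span_mono (insert_subset hη (range_subset_iff.2 hv))
  have hcard := Submodule.finrank_mono hsub
  rw [finrank_span_eq_card hli, hr, Fintype.card_fin] at hcard
  omega

theorem exists_norm_le_mul_sum_abs_of_span_eq_top {Y ι : Type*} [NormedAddCommGroup Y]
    [NormedSpace ℝ Y] [FiniteDimensional ℝ Y] [Fintype ι] {v : ι → Y →L[ℝ] ℝ}
    (hv : Submodule.span ℝ (range v) = ⊤) : ∃ M : ℝ, 0 ≤ M ∧ ∀ y, ‖y‖ ≤ M * ∑ j, |v j y| := by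
  have hker : (ContinuousLinearMap.pi v).toLinearMap.ker = ⊥ := by
    refine LinearMap.ker_eq_bot'.2 fun y hy =>
      SeparatingDual.eq_zero_of_forall_dual_eq_zero (R := ℝ) fun η => ?_
    have hη : η ∈ Submodule.span ℝ (range v) := by rw [hv]; trivial
    induction hη using Submodule.span_induction with
    | mem ζ hζ => obtain ⟨j, rfl⟩ := hζ; exact congrFun hy j
    | zero => rfl
    | add ζ ξ _ _ hζ hξ => rw [add_apply, hζ, hξ, add_zero]
    | smul c ζ _ hζ => rw [smul_apply, hζ, smul_zero]
  obtain ⟨M, -, hM⟩ := LinearMap.exists_antilipschitzWith _ hker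
  refine ⟨M, M.2, fun y => (hM.le_mul_norm (map_zero _) y).trans ?_⟩
  refine mul_le_mul_of_nonneg_left ?_ M.2
  exact (pi_norm_le_iff_of_nonneg (by positivity)).2 fun j =>
    Finset.single_le_sum (f := fun j => |v j y|) (fun _ _ => abs_nonneg _) (Finset.mem_univ j)

end LinearAlgebra

section TouchingSpan

variable {X Y : Type*} [NormedAddCommGroup X] [NormedAddCommGroup Y] [NormedSpace ℝ Y]

section NormedSpace

variable [NormedSpace ℝ X] {f : X → Y} {V : Set X}

theorem mem_touchingCone_of_forall_mem (hV : IsOpen V) {x : X} (hx : x ∈ V) {η : Y →L[ℝ] ℝ}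
    {C : ℝ} (h : ∀ z ∈ V, η (taylorRemainder f x z) ≤ C * ‖z - x‖ ^ 2) : η ∈ touchingCone f x :=
  ⟨C, eventually_of_mem (hV.mem_nhds hx) h⟩

theorem isClosed_setOf_forall_apply_taylorRemainder_le {ι : Type*} (hV : IsOpen V)
    (hf : ContDiffOn ℝ 1 f V) (C : ℝ) (z : X) :
    IsClosed {a : V × (ι → Y →L[ℝ] ℝ) |
      ∀ j, a.2 j (taylorRemainder f a.1 z) ≤ C * ‖z - a.1‖ ^ 2} := by
  have hcont := continuous_taylorRemainder_subtype hV hf z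
  simp only [ofPred_forall]
  exact isClosed_iInter fun j => isClosed_le
    (((continuous_apply j).comp continuous_snd).clm_apply (hcont.comp continuous_fst))
    (by fun_prop)

theorem exists_linearIndependent_touching [CompleteSpace X] [FiniteDimensional ℝ Y] {W : Set X}
    (hW : IsOpen W) (hne : W.Nonempty) (hf : ContDiffOn ℝ 1 f W) {r : ℕ}
    (hr : ∀ x ∈ W, Module.finrank ℝ (Submodule.span ℝ (touchingCone f x : Set (Y →L[ℝ] ℝ))) = r) :
    ∃ K : Set (Fin r → Y →L[ℝ] ℝ), IsCompact K ∧ (∀ v ∈ K, LinearIndependent ℝ v) ∧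
      ∃ C : ℝ, ∃ V ⊆ W, IsOpen V ∧ V.Nonempty ∧ ∀ x ∈ V, ∃ v ∈ K, ∀ z ∈ V, ∀ j,
        v j (taylorRemainder f x z) ≤ C * ‖z - x‖ ^ 2 := by
  let U : Set (Fin r → Y →L[ℝ] ℝ) := {v | LinearIndependent ℝ v}
  have hU : IsOpen U := isOpen_setOfPred_linearIndependent
  have : ProperSpace (Fin r → Y →L[ℝ] ℝ) := FiniteDimensional.proper ℝ _
  have : LocallyCompactSpace U := hU.locallyCompactSpace
  let K (i : ℕ × ℕ) : Set (Fin r → Y →L[ℝ] ℝ) := (↑) '' compactCovering U i.1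
  have hK (i : ℕ × ℕ) : IsCompact (K i) :=
    (isCompact_compactCovering U i.1).image continuous_subtype_val
  have hev (x : X) (hx : x ∈ W) : ∃ i : ℕ × ℕ, ∃ v ∈ K i, ∀ᶠ z in 𝓝 x, ∀ j,
      v j (taylorRemainder f x z) ≤ i.2 * ‖z - x‖ ^ 2 := by
    obtain ⟨v, hv, -, hli⟩ :=
      Submodule.exists_fun_fin_finrank_span_eq ℝ (touchingCone f x : Set (Y →L[ℝ] ℝ))
    obtain rfl := hr x hx
    obtain ⟨m, hm⟩ := exists_mem_compactCovering (⟨v, hli⟩ : U)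
    choose C hC using hv
    obtain ⟨n, hn⟩ := exists_nat_ge (∑ j, |C j|)
    refine ⟨(m, n), v, ⟨_, hm, rfl⟩, ?_⟩
    filter_upwards [eventually_all.2 hC] with z hz j
    refine (hz j).trans (mul_le_mul_of_nonneg_right ?_ (by positivity))
    exact (le_abs_self _).trans ((Finset.single_le_sum (f := fun j => |C j|)
      (fun _ _ => abs_nonneg _) (Finset.mem_univ j)).trans hn)
  obtain ⟨i, hi⟩ := exists_isOpen_forall_of_forall_eventually hW hne hK
    (p := fun i x v z => ∀ j, v j (taylorRemainder f x z) ≤ i.2 * ‖z - x‖ ^ 2)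
    (fun i z _ => isClosed_setOf_forall_apply_taylorRemainder_le hW hf i.2 z) hev
  refine ⟨K i, hK i, ?_, i.2, hi⟩
  rintro _ ⟨v, -, rfl⟩
  exact v.2

theorem exists_norm_taylorRemainder_le_add [FiniteDimensional ℝ Y] {x : X}
    (hspan : Submodule.span ℝ (touchingCone f x : Set (Y →L[ℝ] ℝ)) = ⊤) :
    ∃ (η : Y →L[ℝ] ℝ) (C : ℝ), ∀ᶠ z in 𝓝 x,
      ‖taylorRemainder f x z‖ ≤ η (taylorRemainder f x z) + C * ‖z - x‖ ^ 2 := by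
  obtain ⟨v, hv, hv_span, -⟩ :=
    Submodule.exists_fun_fin_finrank_span_eq ℝ (touchingCone f x : Set (Y →L[ℝ] ℝ))
  choose C hC using hv
  obtain ⟨M, hM, hnorm⟩ := exists_norm_le_mul_sum_abs_of_span_eq_top (hv_span.trans hspan)
  refine ⟨-M • ∑ j, v j, M * ∑ j, 2 * |C j|, ?_⟩
  filter_upwards [eventually_all.2 hC] with z hz
  set y := taylorRemainder f x z
  have habs (j) : |v j y| ≤ -v j y + 2 * |C j| * ‖z - x‖ ^ 2 := by
    have hCj : C j * ‖z - x‖ ^ 2 ≤ |C j| * ‖z - x‖ ^ 2 := by gcongr; exact le_abs_self _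
    have hnonneg : 0 ≤ |C j| * ‖z - x‖ ^ 2 := by positivity
    exact abs_le.2 ⟨by linarith, by linarith [hz j]⟩
  calc ‖y‖ ≤ M * ∑ j, |v j y| := hnorm y
    _ ≤ M * ∑ j, (-v j y + 2 * |C j| * ‖z - x‖ ^ 2) := by gcongr with j; exact habs j
    _ = (-M • ∑ j, v j) y + M * (∑ j, 2 * |C j|) * ‖z - x‖ ^ 2 := by
      simp only [Finset.sum_add_distrib, Finset.sum_neg_distrib, ← Finset.sum_mul, smul_apply,
        sum_apply, smul_eq_mul]
      ring

end NormedSpace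

variable [InnerProductSpace ℝ X] [FiniteDimensional ℝ X] [FiniteDimensional ℝ Y] {f : X → Y}
  {W : Set X}

-- Linear dependence on a frame from a compact set is a closed condition on the base point, and it
-- holds wherever `η` is touching, that is, on a dense set.
theorem exists_span_touchingCone_eq_top (hW : IsOpen W) (hne : W.Nonempty)
    (hf : ContDiffOn ℝ 1 f W) {r : ℕ}
    (hr : ∀ x ∈ W, Module.finrank ℝ (Submodule.span ℝ (touchingCone f x : Set (Y →L[ℝ] ℝ))) = r) :
    ∃ x ∈ W, Submodule.span ℝ (touchingCone f x : Set (Y →L[ℝ] ℝ)) = ⊤ := by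
  have : ProperSpace X := FiniteDimensional.proper ℝ X
  obtain ⟨K, hK, hKli, C, V, hVW, hV, ⟨x₀, hx₀⟩, htouch⟩ :=
    exists_linearIndependent_touching hW hne hf hr
  refine ⟨x₀, hVW hx₀, eq_top_iff.2 fun η _ => ?_⟩
  let Q : Set (V × (Fin r → Y →L[ℝ] ℝ)) :=
    {a | (∀ z ∈ V, ∀ j, a.2 j (taylorRemainder f a.1 z) ≤ C * ‖z - a.1‖ ^ 2) ∧
      ¬LinearIndependent ℝ (Fin.cons η a.2 : Fin (r + 1) → Y →L[ℝ] ℝ)}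
  have hQ : IsClosed Q := by
    have htouch_closed : IsClosed {a : V × (Fin r → Y →L[ℝ] ℝ) |
        ∀ z ∈ V, ∀ j, a.2 j (taylorRemainder f a.1 z) ≤ C * ‖z - a.1‖ ^ 2} := by
      rw [ofPred_forall]
      refine isClosed_iInter fun z => ?_
      rw [ofPred_forall]
      exact isClosed_iInter fun _ =>
        isClosed_setOf_forall_apply_taylorRemainder_le hV (hf.mono hVW) C z
    exact htouch_closed.inter (isOpen_setOfPred_linearIndependent.preimage
      (continuous_const.finCons continuous_snd)).isClosed_compl
  let S : Set V := {x | ∃ v ∈ K, (x, v) ∈ Q}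
  have hS : IsClosed S := isClosed_setOf_exists_mem_of_isCompact hK hQ
  have hS_dense : Dense S := by
    refine dense_iff_inter_open.2 fun O hO hOne => ?_
    obtain ⟨_, ⟨x, hxO, rfl⟩, hηx⟩ := exists_mem_touchingCone (f := f)
      (hV.isOpenMap_subtype_val O hO) (hOne.image _)
      ((hf.differentiableOn one_ne_zero).mono (by rintro _ ⟨x, -, rfl⟩; exact hVW x.2)) η
    obtain ⟨v, hvK, hv⟩ := htouch x x.2
    exact ⟨x, hxO, v, hvK, hv, not_linearIndependent_finCons (hr x (hVW x.2))
      (fun j => mem_touchingCone_of_forall_mem hV x.2 fun z hz => hv z hz j) hηx⟩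
  have hS_univ : S = univ := hS.closure_eq.symm.trans hS_dense.closure_eq
  obtain ⟨v, hvK, hv, hdep⟩ : (⟨x₀, hx₀⟩ : V) ∈ S := hS_univ ▸ mem_univ _
  rw [linearIndependent_finCons, not_and_not_right] at hdep
  refine Submodule.span_mono (range_subset_iff.2 fun j => ?_) (hdep (hKli v hvK))
  exact mem_touchingCone_of_forall_mem hV hx₀ fun z hz => hv z hz j

end TouchingSpan

section QuadraticRemainder

variable {X Y : Type*} [NormedAddCommGroup X] [NormedAddCommGroup Y] [NormedSpace ℝ Y]
  [FiniteDimensional ℝ Y] {f : X → Y} {W : Set X}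

theorem exists_clm_forall_norm_taylorRemainder_le_add [NormedSpace ℝ X] [CompleteSpace X]
    (hW : IsOpen W) (hne : W.Nonempty) (hf : ContDiffOn ℝ 1 f W)
    (hspan : ∀ x ∈ W, Submodule.span ℝ (touchingCone f x : Set (Y →L[ℝ] ℝ)) = ⊤) :
    ∃ (η : Y →L[ℝ] ℝ) (C : ℝ), ∃ V ⊆ W, IsOpen V ∧ V.Nonempty ∧ ∀ x ∈ V, ∀ z ∈ V,
      ‖taylorRemainder f x z‖ ≤ η (taylorRemainder f x z) + C * ‖z - x‖ ^ 2 := by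
  have : ProperSpace (Y →L[ℝ] ℝ) := FiniteDimensional.proper ℝ _
  let ξ := TopologicalSpace.denseSeq (Y →L[ℝ] ℝ)
  have hev (x : X) (hx : x ∈ W) : ∃ i : ℕ × ℕ, ∀ᶠ z in 𝓝 x,
      ‖taylorRemainder f x z‖ ≤ ξ i.1 (taylorRemainder f x z) + i.2 * ‖z - x‖ ^ 2 := by
    obtain ⟨η, C, hη⟩ := exists_norm_taylorRemainder_le_add (hspan x hx)
    -- Doubling `η` leaves room to replace it by a nearby term of the countable family `ξ`.
    obtain ⟨i, hi⟩ := (TopologicalSpace.denseRange_denseSeq (Y →L[ℝ] ℝ)).exists_dist_lt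
      ((2 : ℝ) • η) one_pos
    obtain ⟨n, hn⟩ := exists_nat_ge (2 * C)
    refine ⟨(i, n), ?_⟩
    filter_upwards [hη] with z hz
    set y := taylorRemainder f x z
    have hclose : 2 * η y - ξ i y ≤ ‖y‖ := by
      calc 2 * η y - ξ i y = ((2 : ℝ) • η - ξ i) y := rfl
        _ ≤ ‖((2 : ℝ) • η - ξ i) y‖ := Real.le_norm_self _
        _ ≤ 1 * ‖y‖ :=
          ContinuousLinearMap.le_of_opNorm_le _ ((dist_eq_norm _ _).symm.trans_le hi.le) y
        _ = ‖y‖ := one_mul _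
    have hconst : 2 * C * ‖z - x‖ ^ 2 ≤ n * ‖z - x‖ ^ 2 := by gcongr
    linarith
  obtain ⟨i, V, hV⟩ := exists_isOpen_forall_mem_of_forall_eventually hW hne
    (fun i z _ => by
      have hcont := continuous_taylorRemainder_subtype hW hf z
      exact isClosed_le (by fun_prop) (by fun_prop)) hev
  exact ⟨ξ i.1, i.2, V, hV⟩

theorem exists_taylorRemainder_isBigO_sq [InnerProductSpace ℝ X] [FiniteDimensional ℝ X]
    (hW : IsOpen W) (hne : W.Nonempty) (hf : ContDiffOn ℝ 1 f W)
    (hspan : ∀ x ∈ W, Submodule.span ℝ (touchingCone f x : Set (Y →L[ℝ] ℝ)) = ⊤) :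
    ∃ x ∈ W, taylorRemainder f x =O[𝓝 x] fun z => ‖z - x‖ ^ 2 := by
  have : ProperSpace X := FiniteDimensional.proper ℝ X
  obtain ⟨η, C, V, hVW, hV, hVne, hbound⟩ :=
    exists_clm_forall_norm_taylorRemainder_le_add hW hne hf hspan
  obtain ⟨x, hx, D, hD⟩ := exists_mem_touchingCone hV hVne
    ((hf.differentiableOn one_ne_zero).mono hVW) η
  refine ⟨x, hVW hx, .of_bound (D + C) ?_⟩
  filter_upwards [hD, hV.mem_nhds hx] with z hηz hz
  calc ‖taylorRemainder f x z‖ ≤ η (taylorRemainder f x z) + C * ‖z - x‖ ^ 2 := hbound x hx z hz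
    _ ≤ D * ‖z - x‖ ^ 2 + C * ‖z - x‖ ^ 2 := by gcongr
    _ = (D + C) * ‖‖z - x‖ ^ 2‖ := by rw [norm_pow, norm_norm]; ring

theorem GraphHomogeneousOn.taylorRemainder_isBigO_sq [InnerProductSpace ℝ X]
    [FiniteDimensional ℝ X] (h : GraphHomogeneousOn 2 f W) (hW : IsOpen W)
    (hf : ContDiffOn ℝ 1 f W) {x : X} (hx : x ∈ W) :
    taylorRemainder f x =O[𝓝 x] fun z => ‖z - x‖ ^ 2 := by
  have hdiff {y : X} (hy : y ∈ W) : DifferentiableAt ℝ f y :=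
    (hf.contDiffAt (hW.mem_nhds hy)).differentiableAt one_ne_zero
  have hrank {y : X} (hy : y ∈ W) {z : X} (hz : z ∈ W) :
      Module.finrank ℝ (Submodule.span ℝ (touchingCone f y : Set (Y →L[ℝ] ℝ))) =
        Module.finrank ℝ (Submodule.span ℝ (touchingCone f z : Set (Y →L[ℝ] ℝ))) :=
    le_antisymm ((h z hz y hy).finrank_span_touchingCone_le (hdiff hz) (hdiff hy))
      ((h y hy z hz).finrank_span_touchingCone_le (hdiff hy) (hdiff hz))
  obtain ⟨y, hy, htop⟩ := exists_span_touchingCone_eq_top hW ⟨x, hx⟩ hf fun z hz => hrank hz hx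
  have hspan (z : X) (hz : z ∈ W) :
      Submodule.span ℝ (touchingCone f z : Set (Y →L[ℝ] ℝ)) = ⊤ :=
    Submodule.eq_top_of_finrank_eq (by rw [hrank hz hy, htop, finrank_top])
  obtain ⟨z, hz, hO⟩ := exists_taylorRemainder_isBigO_sq hW ⟨x, hx⟩ hf hspan
  exact (h x hx z hz).taylorRemainder_isBigO (hdiff hx) (hdiff hz) hO

end QuadraticRemainder

section StrictDifferentiability

open scoped NNReal

variable {X Y : Type*} [NormedAddCommGroup X] [NormedSpace ℝ X] [NormedAddCommGroup Y]
  [NormedSpace ℝ Y] {f : X → Y}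

theorem fderiv_sub_fderiv_apply (f : X → Y) (x y v : X) :
    (fderiv ℝ f y - fderiv ℝ f x) v =
      taylorRemainder f x (y + v) - taylorRemainder f y (y + v) - taylorRemainder f x y := by
  have hsplit : y + v - x = (y - x) + v := by abel
  rw [taylorRemainder, taylorRemainder, taylorRemainder, hsplit, add_sub_cancel_left, sub_apply,
    map_add]
  abel

theorem lipschitzOnWith_fderiv_of_norm_taylorRemainder_le {c : X} {r : ℝ} {C : ℝ≥0}
    (h : ∀ x ∈ ball c (3 * r), ∀ z ∈ ball c (3 * r),
      ‖taylorRemainder f x z‖ ≤ C * ‖z - x‖ ^ 2) :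
    LipschitzOnWith (6 * C) (fderiv ℝ f) (ball c r) := by
  refine LipschitzOnWith.of_dist_le_mul fun y hy x hx => ?_
  rcases eq_or_ne y x with rfl | hyx
  · simp
  rw [mem_ball_iff_norm] at hx hy
  simp only [mem_ball_iff_norm] at h
  rw [dist_eq_norm, dist_eq_norm]
  set δ := ‖y - x‖
  have hδ : 0 < δ := norm_sub_pos_iff.2 hyx
  have hδr : δ < 2 * r := by linarith [norm_sub_le_norm_sub_add_norm_sub y c x, norm_sub_rev x c]
  refine ContinuousLinearMap.opNorm_le_of_unit_norm (by positivity) fun w hw => ?_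
  have hv : ‖δ • w‖ = δ := by rw [norm_smul, hw, norm_norm, mul_one]
  set z := y + δ • w
  have hzy : ‖z - y‖ = δ := by rw [add_sub_cancel_left, hv]
  have hzx : ‖z - x‖ ≤ 2 * δ := by linarith [norm_sub_le_norm_sub_add_norm_sub z y x]
  have hz : ‖z - c‖ < 3 * r := by linarith [norm_sub_le_norm_sub_add_norm_sub z y c]
  have hxz : ‖taylorRemainder f x z‖ ≤ C * (2 * δ) ^ 2 :=
    (h x (by linarith) z hz).trans (by gcongr)
  have hyz : ‖taylorRemainder f y z‖ ≤ C * δ ^ 2 := hzy ▸ h y (by linarith) z hz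
  have hxy : ‖taylorRemainder f x y‖ ≤ C * δ ^ 2 := h x (by linarith) y (by linarith)
  refine le_of_mul_le_mul_left ?_ hδ
  calc δ * ‖(fderiv ℝ f y - fderiv ℝ f x) w‖ = ‖(fderiv ℝ f y - fderiv ℝ f x) (δ • w)‖ := by
        rw [map_smul, norm_smul, norm_norm]
    _ ≤ ‖taylorRemainder f x z‖ + ‖taylorRemainder f y z‖ + ‖taylorRemainder f x y‖ := by
        rw [fderiv_sub_fderiv_apply]
        exact (norm_sub_le _ _).trans (by gcongr; exact norm_sub_le _ _)
    _ ≤ C * (2 * δ) ^ 2 + C * δ ^ 2 + C * δ ^ 2 := by gcongr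
    _ = δ * (((6 * C : ℝ≥0) : ℝ) * δ) := by push_cast; ring

theorem exists_lipschitzOnWith_fderiv [CompleteSpace X] {W : Set X} (hW : IsOpen W)
    (hne : W.Nonempty) (hf : ContDiffOn ℝ 1 f W)
    (hO : ∀ x ∈ W, taylorRemainder f x =O[𝓝 x] fun z => ‖z - x‖ ^ 2) :
    ∃ K, ∃ V ⊆ W, IsOpen V ∧ V.Nonempty ∧ LipschitzOnWith K (fderiv ℝ f) V := by
  have hev (x : X) (hx : x ∈ W) :
      ∃ n : ℕ, ∀ᶠ z in 𝓝 x, ‖taylorRemainder f x z‖ ≤ n * ‖z - x‖ ^ 2 := by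
    obtain ⟨C, hC⟩ := (hO x hx).bound
    obtain ⟨n, hn⟩ := exists_nat_ge C
    refine ⟨n, hC.mono fun z hz => hz.trans ?_⟩
    rw [norm_pow, norm_norm]
    gcongr
  obtain ⟨n, V, hVW, hV, ⟨c, hc⟩, hbound⟩ := exists_isOpen_forall_mem_of_forall_eventually hW hne
    (fun n z _ => by
      have hcont := continuous_taylorRemainder_subtype hW hf z
      exact isClosed_le (by fun_prop) (by fun_prop)) hev
  obtain ⟨ε, hε, hball⟩ := Metric.isOpen_iff.1 hV c hc
  have hball' : ball c (3 * (ε / 3)) ⊆ V := by rwa [mul_div_cancel₀ _ three_ne_zero]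
  refine ⟨6 * n, ball c (ε / 3), ?_, isOpen_ball, ⟨c, mem_ball_self (by positivity)⟩,
    lipschitzOnWith_fderiv_of_norm_taylorRemainder_le fun x hx z hz =>
      hbound x (hball' hx) z (hball' hz)⟩
  exact (ball_subset_ball (by linarith)).trans (hball.trans hVW)

theorem exists_differentiableAt_of_lipschitzOnWith [FiniteDimensional ℝ X]
    [FiniteDimensional ℝ Y] {K : ℝ≥0} {V : Set X} (hV : IsOpen V) (hne : V.Nonempty)
    (hf : LipschitzOnWith K f V) : ∃ x ∈ V, DifferentiableAt ℝ f x := by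
  let _ : MeasurableSpace X := borel X
  have : BorelSpace X := ⟨rfl⟩
  have hae := hf.ae_differentiableWithinAt_of_mem (μ := MeasureTheory.Measure.addHaar)
  have hpos : MeasureTheory.Measure.addHaar V ≠ 0 := hV.measure_ne_zero _ hne
  obtain ⟨x, hx, hdiff⟩ :=
    ((MeasureTheory.frequently_ae_mem_iff.2 hpos).and_eventually hae).exists
  exact ⟨x, hx, (hdiff hx).differentiableAt (hV.mem_nhds hx)⟩

theorem norm_fderiv_sub_le_of_approximatesLinearOn {A : X →L[ℝ] Y} {s : Set X} {c : ℝ≥0} {x : X}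
    (hA : ApproximatesLinearOn f A s c) (hs : s ∈ 𝓝 x) (hf : DifferentiableAt ℝ f x) :
    ‖fderiv ℝ f x - A‖ ≤ c :=
  (hf.hasFDerivAt.sub A.hasFDerivAt).le_of_lipschitzOn hs hA.lipschitzOnWith

theorem continuousAt_fderiv_of_hasStrictFDerivAt {A : X →L[ℝ] Y} {x : X}
    (hA : HasStrictFDerivAt f A x) (hf : ∀ᶠ y in 𝓝 x, DifferentiableAt ℝ f y) :
    ContinuousAt (fderiv ℝ f) x := by
  rw [ContinuousAt, hA.hasFDerivAt.fderiv]
  refine (nhds_basis_closedBall.tendsto_right_iff).2 fun c hc => ?_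
  lift c to ℝ≥0 using hc.le
  obtain ⟨s, hs, happrox⟩ := hA.approximates_deriv_on_nhds (.inr hc)
  filter_upwards [hf, eventually_mem_nhds_iff.2 hs] with y hy hsy
  exact mem_closedBall_iff_norm.2 (norm_fderiv_sub_le_of_approximatesLinearOn happrox hsy hy)

theorem hasStrictFDerivAt_of_forall_approximatesLinearOn {x : X} (hf : DifferentiableAt ℝ f x)
    (h : ∀ c : ℝ≥0, 0 < c → ∃ A : X →L[ℝ] Y, ∃ s ∈ 𝓝 x, ApproximatesLinearOn f A s c) :
    HasStrictFDerivAt f (fderiv ℝ f x) x := by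
  refine .of_isLittleO (isLittleO_iff.2 fun ε hε => ?_)
  lift ε to ℝ≥0 using hε.le
  obtain ⟨A, s, hs, hA⟩ := h (ε / 2) (half_pos hε)
  have hfA := norm_fderiv_sub_le_of_approximatesLinearOn hA hs hf
  filter_upwards [prod_mem_nhds hs hs] with ⟨y, z⟩ ⟨hy, hz⟩
  calc ‖f y - f z - fderiv ℝ f x (y - z)‖
      = ‖(f y - f z - A (y - z)) - (fderiv ℝ f x - A) (y - z)‖ := by rw [sub_apply]; congr 1; abel
    _ ≤ (ε / 2 : ℝ≥0) * ‖y - z‖ + (ε / 2 : ℝ≥0) * ‖y - z‖ :=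
        norm_sub_le_of_le (hA y hy z hz) (ContinuousLinearMap.le_of_opNorm_le _ hfA _)
    _ = ε * ‖y - z‖ := by push_cast; ring

variable [FiniteDimensional ℝ X] [FiniteDimensional ℝ Y] {W : Set X}

theorem exists_approximatesLinearOn (hW : IsOpen W) (hne : W.Nonempty)
    (hf : DifferentiableOn ℝ f W) {c : ℝ≥0} (hc : 0 < c) :
    ∃ A : X →L[ℝ] Y, ∃ V ⊆ W, IsOpen V ∧ V.Nonempty ∧ ApproximatesLinearOn f A V c := by
  have : ProperSpace X := FiniteDimensional.proper ℝ X
  have : ProperSpace (X →L[ℝ] Y) := FiniteDimensional.proper ℝ _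
  let A := TopologicalSpace.denseSeq (X →L[ℝ] Y)
  have hev (x : X) (hx : x ∈ W) :
      ∃ i, ∀ᶠ z in 𝓝 x, ‖f x - f z - A i (x - z)‖ ≤ c * ‖x - z‖ := by
    have hc2 : (0 : ℝ) < c / 2 := half_pos hc
    obtain ⟨i, hi⟩ := (TopologicalSpace.denseRange_denseSeq (X →L[ℝ] Y)).exists_dist_lt
      (fderiv ℝ f x) hc2
    refine ⟨i, ?_⟩
    filter_upwards [(hf.hasFDerivAt (hW.mem_nhds hx)).isLittleO.bound hc2] with z hz
    calc ‖f x - f z - A i (x - z)‖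
        = ‖(f z - f x - fderiv ℝ f x (z - x)) + (fderiv ℝ f x - A i) (z - x)‖ := by
          rw [norm_sub_rev, ← neg_sub z x, map_neg, sub_apply]
          congr 1
          abel
      _ ≤ c / 2 * ‖z - x‖ + c / 2 * ‖z - x‖ := norm_add_le_of_le hz
          (ContinuousLinearMap.le_of_opNorm_le _ ((dist_eq_norm _ _).symm.trans_le hi.le) _)
      _ = c * ‖x - z‖ := by rw [norm_sub_rev]; ring
  obtain ⟨i, V, hV⟩ := exists_isOpen_forall_mem_of_forall_eventually hW hne
    (fun i z _ => by
      have hcont : Continuous fun x : W => f x := hf.continuousOn.domRestrict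
      exact isClosed_le
        ((hcont.sub continuous_const).sub ((A i).continuous.comp (by fun_prop))).norm
        (by fun_prop)) hev
  exact ⟨A i, V, hV⟩

theorem exists_hasStrictFDerivAt (hW : IsOpen W) (hne : W.Nonempty)
    (hf : DifferentiableOn ℝ f W) : ∃ x ∈ W, HasStrictFDerivAt f (fderiv ℝ f x) x := by
  have : CompleteSpace X := FiniteDimensional.complete ℝ X
  have : BaireSpace W := hW.baireSpace
  have : Nonempty W := hne.to_subtype
  obtain ⟨c, -, hc_pos, hc_lim⟩ := exists_seq_strictAnti_tendsto (0 : ℝ≥0)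
  let S (m : ℕ) : Set W :=
    {x | ∃ A : X →L[ℝ] Y, ∃ s ∈ 𝓝 (x : X), ApproximatesLinearOn f A s (c m)}
  have hS_open (m : ℕ) : IsOpen (S m) := by
    refine isOpen_iff_mem_nhds.2 fun x ⟨A, s, hs, hA⟩ => ?_
    filter_upwards [continuousAt_subtype_val.eventually (eventually_mem_nhds_iff.2 hs)] with y hy
    exact ⟨A, s, hy, hA⟩
  have hS_dense (m : ℕ) : Dense (S m) := by
    refine dense_iff_inter_open.2 fun O hO hOne => ?_
    obtain ⟨A, V, hVO, hV, ⟨_, hxV⟩, hA⟩ := exists_approximatesLinearOn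
      (hW.isOpenMap_subtype_val O hO) (hOne.image _)
      (hf.mono (Subtype.coe_image_subset W O)) (hc_pos m)
    obtain ⟨x, hx, rfl⟩ := hVO hxV
    exact ⟨x, hx, A, V, hV.mem_nhds hxV, hA⟩
  obtain ⟨x, hx⟩ := (dense_iInter_of_isOpen hS_open hS_dense).nonempty
  refine ⟨x, x.2, hasStrictFDerivAt_of_forall_approximatesLinearOn
    (hf.differentiableAt (hW.mem_nhds x.2)) fun ε hε => ?_⟩
  obtain ⟨m, hm⟩ := (hc_lim.eventually_lt_const hε).exists
  obtain ⟨A, s, hs, hA⟩ := mem_iInter.1 hx m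
  exact ⟨A, s, hs, hA.mono_num hm.le⟩

end StrictDifferentiability

section Bootstrap

universe u

namespace GraphHomogeneousOn

variable {X Y : Type u} [NormedAddCommGroup X] [InnerProductSpace ℝ X] [FiniteDimensional ℝ X]
  [NormedAddCommGroup Y] [NormedSpace ℝ Y] [FiniteDimensional ℝ Y] {f : X → Y} {W : Set X}

theorem differentiableOn_oneJet (h : GraphHomogeneousOn 2 f W) (hW : IsOpen W)
    (hf : ContDiffOn ℝ 1 f W) : DifferentiableOn ℝ (oneJet f) W := by
  intro x hx
  have hcont {y : X} (hy : y ∈ W) : ContDiffAt ℝ 1 f y := hf.contDiffAt (hW.mem_nhds hy)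
  obtain ⟨K, V, hVW, hV, hVne, hlip⟩ := exists_lipschitzOnWith_fderiv hW ⟨x, hx⟩ hf
    fun y hy => h.taylorRemainder_isBigO_sq hW hf hy
  obtain ⟨y, hy, hdiff⟩ := exists_differentiableAt_of_lipschitzOnWith hV hVne hlip
  have hjet : DifferentiableAt ℝ (oneJet f) y :=
    ((hcont (hVW hy)).differentiableAt one_ne_zero).prodMk hdiff
  exact ((h y (hVW hy) x hx).differentiableAt_oneJet (hcont (hVW hy)) (hcont hx)
    hjet).differentiableWithinAt

theorem contDiffOn_oneJet (h : GraphHomogeneousOn 2 f W) (hW : IsOpen W)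
    (hf : ContDiffOn ℝ 1 f W) : ContDiffOn ℝ 1 (oneJet f) W := by
  have hdiff := h.differentiableOn_oneJet hW hf
  have hcont {y : X} (hy : y ∈ W) : ContDiffAt ℝ 1 f y := hf.contDiffAt (hW.mem_nhds hy)
  rw [← zero_add (1 : WithTop ℕ∞), contDiffOn_succ_iff_fderiv_of_isOpen hW, contDiffOn_zero]
  refine ⟨hdiff, by simp, fun x hx => ?_⟩
  obtain ⟨y, hy, hstrict⟩ := exists_hasStrictFDerivAt hW ⟨x, hx⟩ hdiff
  obtain ⟨J, hJ⟩ :=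
    (h y hy x hx).hasStrictFDerivAt_oneJet (hcont hy) (hcont hx) ⟨_, hstrict⟩
  exact (continuousAt_fderiv_of_hasStrictFDerivAt hJ
    ((hW.eventually_mem hx).mono fun z hz =>
      hdiff.differentiableAt (hW.mem_nhds hz))).continuousWithinAt

theorem contDiffOn {k : ℕ} (hk : 1 ≤ k) (h : GraphHomogeneousOn k f W) (hW : IsOpen W)
    (hf : ContDiffOn ℝ 1 f W) : ContDiffOn ℝ k f W := by
  induction k, hk using Nat.le_induction generalizing Y with
  | base => exact_mod_cast hf
  | succ k hk ih =>
    have hjet : ContDiffOn ℝ k (oneJet f) W := ih (h.oneJet hW hf)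
      ((h.of_le (by omega)).contDiffOn_oneJet hW hf)
    rw [Nat.cast_add, Nat.cast_one, contDiffOn_succ_iff_fderiv_of_isOpen hW]
    exact ⟨hf.differentiableOn one_ne_zero, by simp, hjet.snd⟩

end GraphHomogeneousOn

end Bootstrap

section Diffeo

variable {E F G : Type*} [NormedAddCommGroup E] [NormedSpace ℝ E] [NormedAddCommGroup F]
  [NormedSpace ℝ F] [NormedAddCommGroup G] [NormedSpace ℝ G] {k : ℕ} {N M : Set E} {S : Set F}
  {p : E}

namespace IsCkDiffeoOn

variable {H : E → F} {H' : F → E} {U : Set E} {V : Set F}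

protected theorem symm (h : IsCkDiffeoOn k H H' U V) : IsCkDiffeoOn k H' H V U :=
  let ⟨hU, hV, hH, hH', hmaps, hmaps', hleft, hright⟩ := h
  ⟨hV, hU, hH', hH, hmaps', hmaps, hright, hleft⟩

protected theorem trans {K : F → G} {K' : G → F} {U₁ : Set F} {V₁ : Set G}
    (h : IsCkDiffeoOn k H H' U V) (g : IsCkDiffeoOn k K K' U₁ V₁) :
    IsCkDiffeoOn k (K ∘ H) (H' ∘ K') (U ∩ H ⁻¹' U₁) (V₁ ∩ K' ⁻¹' V) := by
  obtain ⟨hU, hV, hH, hH', hmaps, hmaps', hleft, hright⟩ := h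
  obtain ⟨hU₁, hV₁, hK, hK', kmaps, kmaps', kleft, kright⟩ := g
  refine ⟨hH.continuousOn.isOpen_inter_preimage hU hU₁,
    hK'.continuousOn.isOpen_inter_preimage hV₁ hV, hK.comp_inter hH, hH'.comp_inter hK',
    fun x ⟨hx, hHx⟩ => ⟨kmaps hHx, ?_⟩, fun y ⟨hy, hKy⟩ => ⟨hmaps' hKy, ?_⟩,
    fun x ⟨hx, hHx⟩ => ?_, fun y ⟨hy, hKy⟩ => ?_⟩
  · rw [mem_preimage, Function.comp_apply, kleft _ hHx]
    exact hmaps hx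
  · rw [mem_preimage, Function.comp_apply, hright _ hKy]
    exact kmaps' hy
  · rw [Function.comp_apply, Function.comp_apply, kleft _ hHx, hleft x hx]
  · rw [Function.comp_apply, Function.comp_apply, hright _ hKy, kright y hy]

theorem restrict (h : IsCkDiffeoOn k H H' U V) {O : Set E} (hO : IsOpen O) :
    IsCkDiffeoOn k H H' (U ∩ O) (V ∩ H' ⁻¹' O) := by
  obtain ⟨hU, hV, hH, hH', hmaps, hmaps', hleft, hright⟩ := h
  refine ⟨hU.inter hO, hH'.continuousOn.isOpen_inter_preimage hV hO, hH.mono inter_subset_left,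
    hH'.mono inter_subset_left, fun x ⟨hx, hxO⟩ => ⟨hmaps hx, ?_⟩,
    fun y ⟨hy, hyO⟩ => ⟨hmaps' hy, hyO⟩, fun x hx => hleft x hx.1, fun y hy => hright y hy.1⟩
  rwa [mem_preimage, hleft x hx]

theorem image_inter_eq_iff (h : IsCkDiffeoOn k H H' U V) :
    H '' (N ∩ U) = V ∩ S ↔ ∀ x ∈ U, x ∈ N ↔ H x ∈ S := by
  obtain ⟨-, -, -, -, hmaps, hmaps', hleft, hright⟩ := h
  have himage : H '' (N ∩ U) = V ∩ H' ⁻¹' N := by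
    ext y
    constructor
    · rintro ⟨x, ⟨hxN, hxU⟩, rfl⟩
      exact ⟨hmaps hxU, by rwa [mem_preimage, hleft x hxU]⟩
    · rintro ⟨hyV, hyN⟩
      exact ⟨H' y, ⟨hyN, hmaps' hyV⟩, hright y hyV⟩
  rw [himage]
  constructor
  · intro heq x hx
    have hxS := Set.ext_iff.1 heq (H x)
    simpa only [mem_inter_iff, mem_preimage, hmaps hx, hleft x hx, true_and] using hxS
  · intro hiff
    ext y
    refine and_congr_right fun hy => ?_
    rw [mem_preimage, hiff _ (hmaps' hy), hright y hy]

theorem exists_hasFDerivAt_equiv (h : IsCkDiffeoOn 1 H H' U V) (hp : p ∈ U) :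
    ∃ L : E ≃L[ℝ] F, HasFDerivAt H (L : E →L[ℝ] F) p := by
  obtain ⟨hU, hV, hH, hH', hmaps, -, hleft, hright⟩ := h
  have hdiff : DifferentiableAt ℝ H p :=
    (hH.contDiffAt (hU.mem_nhds hp)).differentiableAt (by simp)
  have hdiff' : DifferentiableAt ℝ H' (H p) :=
    (hH'.contDiffAt (hV.mem_nhds (hmaps hp))).differentiableAt (by simp)
  have hleft_deriv := fderiv_fderiv_of_left_inverse hdiff hdiff'
    (eventually_of_mem (hU.mem_nhds hp) hleft)
  have hright_deriv := fderiv_fderiv_of_left_inverse hdiff' (by rwa [hleft p hp])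
    (eventually_of_mem (hV.mem_nhds (hmaps hp)) hright)
  rw [hleft p hp] at hright_deriv
  exact ⟨.equivOfInverse _ _ hleft_deriv hright_deriv, hdiff.hasFDerivAt⟩

end IsCkDiffeoOn

theorem isCkDiffeoOn_continuousLinearEquiv (k : ℕ) (L : E ≃L[ℝ] F) :
    IsCkDiffeoOn k L L.symm univ univ :=
  ⟨isOpen_univ, isOpen_univ, L.contDiff.contDiffOn, L.symm.contDiff.contDiffOn, mapsTo_univ _ _,
    mapsTo_univ _ _, fun x _ => L.symm_apply_apply x, fun y _ => L.apply_symm_apply y⟩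

theorem isCkDiffeoOn_add_continuousLinearEquiv (k : ℕ) (q : F) (L : E ≃L[ℝ] F) :
    IsCkDiffeoOn k (fun x => q + L x) (fun y => L.symm (y - q)) univ univ := by
  refine ⟨isOpen_univ, isOpen_univ, ContDiff.contDiffOn (by fun_prop),
    ContDiff.contDiffOn (by fun_prop), mapsTo_univ _ _, mapsTo_univ _ _, fun x _ => ?_,
    fun y _ => ?_⟩
  · simp only [add_sub_cancel_left, L.symm_apply_apply]
  · simp only [L.apply_symm_apply, add_sub_cancel]

theorem isCkDiffeoOn_shear {f : E → F} {W : Set E} (hW : IsOpen W) (hf : ContDiffOn ℝ k f W) :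
    IsCkDiffeoOn k (fun w : E × F => (w.1, w.2 - f w.1)) (fun w => (w.1, w.2 + f w.1))
      (Prod.fst ⁻¹' W) (Prod.fst ⁻¹' W) := by
  have hfst : ContDiffOn ℝ k (fun w : E × F => f w.1) (Prod.fst ⁻¹' W) :=
    hf.comp contDiff_fst.contDiffOn fun _ hw => hw
  exact ⟨hW.preimage continuous_fst, hW.preimage continuous_fst,
    contDiffOn_fst.prodMk (contDiffOn_snd.sub hfst),
    contDiffOn_fst.prodMk (contDiffOn_snd.add hfst), fun _ hw => hw, fun _ hw => hw,
    fun w _ => Prod.ext rfl (sub_add_cancel _ _),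
    fun w _ => Prod.ext rfl (add_sub_cancel_right _ _)⟩

theorem CkHomogeneous.preimage {T : Set F} (h : CkHomogeneous k T) {a : E → F} {a' : F → E}
    (ha : IsCkDiffeoOn k a a' univ univ) : CkHomogeneous k (a ⁻¹' T) := by
  intro x hx y hy
  obtain ⟨U, V, H, H', hH, hxU, hyV, hxy, hT⟩ := h _ hx _ hy
  obtain ⟨-, -, -, -, -, -, hleft, hright⟩ := id ha
  have hconj := (ha.trans hH).trans ha.symm
  rw [inter_comm T V, hH.image_inter_eq_iff] at hT
  refine ⟨_, _, _, _, hconj, ⟨⟨trivial, hxU⟩, trivial⟩, ⟨trivial, hyV, trivial⟩, ?_,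
    (hconj.image_inter_eq_iff.2 ?_).trans (inter_comm _ _)⟩
  · simp only [Function.comp_apply, hxy, hleft y trivial]
  · rintro z ⟨⟨-, hz⟩, -⟩
    simp only [mem_preimage, Function.comp_apply, hright _ trivial, hT _ hz]

/-- Near `p`, some `C^k` diffeomorphism maps `N` onto the model set `S`. A `C^k` submanifold of
`ℝ^d` is a set that can be straightened to a coordinate plane at each of its points. -/
def StraightenableAt (k : ℕ) (N : Set E) (S : Set F) (p : E) : Prop :=
  ∃ (U : Set E) (V : Set F) (φ : E → F) (φ' : F → E),
    IsCkDiffeoOn k φ φ' U V ∧ p ∈ U ∧ φ '' (N ∩ U) = V ∩ S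

namespace StraightenableAt

theorem congr_set (h : StraightenableAt k N S p) (hNM : ∀ᶠ x in 𝓝 p, x ∈ N ↔ x ∈ M) :
    StraightenableAt k M S p := by
  obtain ⟨U, V, φ, φ', hφ, hpU, hN⟩ := h
  obtain ⟨O, hO, hO_open, hpO⟩ := _root_.eventually_nhds_iff.1 hNM
  refine ⟨_, _, φ, φ', hφ.restrict hO_open, ⟨hpU, hpO⟩,
    (hφ.restrict hO_open).image_inter_eq_iff.2 ?_⟩
  rintro x ⟨hxU, hxO⟩
  rw [← hO x hxO, hφ.image_inter_eq_iff.1 hN x hxU]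

theorem preimage {a : G → E} {a' : E → G} {q : G} {U : Set G} {V : Set E}
    (h : StraightenableAt k N S (a q)) (ha : IsCkDiffeoOn k a a' U V) (hq : q ∈ U) :
    StraightenableAt k (a ⁻¹' N) S q := by
  obtain ⟨O, P, φ, φ', hφ, hqO, hN⟩ := h
  exact ⟨_, _, _, _, ha.trans hφ, ⟨hq, hqO⟩, (ha.trans hφ).image_inter_eq_iff.2
    fun x hx => hφ.image_inter_eq_iff.1 hN _ hx.2⟩

theorem preimage_model {b : G → F} {b' : F → G} (h : StraightenableAt k N S p)
    (hb : IsCkDiffeoOn k b b' univ univ) : StraightenableAt k N (b ⁻¹' S) p := by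
  obtain ⟨U, V, φ, φ', hφ, hpU, hN⟩ := h
  refine ⟨_, _, _, _, hφ.trans hb.symm, ⟨hpU, trivial⟩,
    (hφ.trans hb.symm).image_inter_eq_iff.2 fun x hx => ?_⟩
  obtain ⟨-, -, -, -, -, -, -, hright⟩ := hb
  rw [hφ.image_inter_eq_iff.1 hN x hx.1, mem_preimage, Function.comp_apply, hright _ trivial]

end StraightenableAt

theorem straightenableAt_submodule_iff [FiniteDimensional ℝ F] {S T : Submodule ℝ F}
    (hST : IsCompl S T) :
    StraightenableAt k N (S : Set F) p ↔ StraightenableAt k N {w : S × T | w.2 = 0} p := by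
  let e : (S × T) ≃L[ℝ] F := (S.prodEquivOfIsCompl T hST).toContinuousLinearEquiv
  have he : e.symm ⁻¹' {w : S × T | w.2 = 0} = S := by
    ext x
    exact Submodule.prodEquivOfIsCompl_symm_apply_snd_eq_zero S T hST
  rw [← he]
  refine ⟨fun h => ?_, fun h => h.preimage_model (isCkDiffeoOn_continuousLinearEquiv k e.symm)⟩
  convert h.preimage_model (isCkDiffeoOn_continuousLinearEquiv k e) using 1
  rw [← preimage_comp, e.symm_comp_self, preimage_id]

end Diffeo

section GraphChart

universe u

variable {E : Type*} [NormedAddCommGroup E] [NormedSpace ℝ E] {X Y : Type u}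
  [NormedAddCommGroup X] [NormedAddCommGroup Y] [NormedSpace ℝ Y] {k : ℕ} {M : Set (X × Y)}
  {N : Set E} {p : E} {f : X → Y} {x x' : X} {W : Set X}

section NormedSpace

variable [NormedSpace ℝ X]

theorem IsCkDiffeoOn.isGraphGermMap {H H' : X × Y → X × Y} {U V : Set (X × Y)}
    (hH : IsCkDiffeoOn k H H' U V) (hxU : (x, f x) ∈ U) (hbase : H (x, f x) = (x', f x'))
    (hM : ∀ w ∈ U, w ∈ M ↔ H w ∈ M) (hf : ContinuousAt f x)
    (hx : ∀ᶠ w in 𝓝 (x, f x), w ∈ M ↔ f w.1 = w.2)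
    (hx' : ∀ᶠ w in 𝓝 (x', f x'), w ∈ M ↔ f w.1 = w.2) :
    IsGraphGermMap k f H H' x x' := by
  obtain ⟨hU, -, hH_diff, -, -, -, hleft, -⟩ := hH
  have hU_nhds : U ∈ 𝓝 (x, f x) := hU.mem_nhds hxU
  have hH_at : ContDiffAt ℝ k H (x, f x) := hH_diff.contDiffAt hU_nhds
  have hgraph : ContinuousAt (fun z => (z, f z)) x := continuousAt_id.prodMk hf
  have himage : ∀ᶠ w in 𝓝 (x, f x), H w ∈ M ↔ f (H w).1 = (H w).2 :=
    hH_at.continuousAt.eventually (by rwa [hbase])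
  refine ⟨hH_at, hbase, eventually_of_mem hU_nhds hleft, ?_⟩
  filter_upwards [hgraph.eventually hU_nhds, hgraph.eventually hx, hgraph.eventually himage]
    with z hzU hz hHz
  exact (hHz.1 ((hM _ hzU).1 (hz.2 rfl))).symm

theorem CkHomogeneous.graphHomogeneousOn (h : CkHomogeneous k M) (hW : IsOpen W)
    (hf : ContinuousOn f W) (hM : ∀ x ∈ W, ∀ᶠ w in 𝓝 (x, f x), w ∈ M ↔ f w.1 = w.2) :
    GraphHomogeneousOn k f W := by
  intro x hx x' hx'
  have hgraph_mem : ∀ z ∈ W, (z, f z) ∈ M := fun z hz => (hM z hz).self_of_nhds.2 rfl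
  obtain ⟨U, V, H, H', hH, hxU, hxV, hbase, himage⟩ := h _ (hgraph_mem x hx) _ (hgraph_mem x' hx')
  have hH_mem : ∀ w ∈ U, w ∈ M ↔ H w ∈ M := by
    rwa [inter_comm M V, hH.image_inter_eq_iff] at himage
  obtain ⟨-, -, -, -, -, hmaps', hleft, hright⟩ := id hH
  have hH'_mem : ∀ w ∈ V, w ∈ M ↔ H' w ∈ M := fun w hw => by
    rw [hH_mem _ (hmaps' hw), hright w hw]
  have hbase' : H' (x', f x') = (x, f x) := by rw [← hbase, hleft _ hxU]
  have hf_at : ∀ z ∈ W, ContinuousAt f z := fun z hz => hf.continuousAt (hW.mem_nhds hz)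
  exact ⟨H, H', hH.isGraphGermMap hxU hbase hH_mem (hf_at x hx) (hM x hx) (hM x' hx'),
    hH.symm.isGraphGermMap hxV hbase' hH'_mem (hf_at x' hx') (hM x' hx') (hM x hx)⟩

theorem straightenableAt_graph (hW : IsOpen W) (hf : ContDiffOn ℝ k f W) (hx : x ∈ W) :
    StraightenableAt k {w : X × Y | f w.1 = w.2} {w : X × Y | w.2 = 0} (x, f x) :=
  ⟨_, _, _, _, isCkDiffeoOn_shear hW hf, hx, (isCkDiffeoOn_shear hW hf).image_inter_eq_iff.2
    fun _ _ => eq_comm.trans sub_eq_zero.symm⟩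

theorem exists_implicitFunction_of_hasFDerivAt_snd [CompleteSpace X] [CompleteSpace Y]
    {g : X × Y → Y} {w₀ : X × Y} (hg : ContDiffAt ℝ 1 g w₀)
    (hg' : HasFDerivAt g (ContinuousLinearMap.snd ℝ X Y) w₀) :
    ∃ f : X → Y, f w₀.1 = w₀.2 ∧ ContDiffAt ℝ 1 f w₀.1 ∧
      ∀ᶠ w in 𝓝 w₀, g w = g w₀ ↔ f w.1 = w.2 := by
  have hinv : (fderiv ℝ g w₀ ∘L .inr ℝ X Y).IsInvertible :=
    ⟨.refl ℝ Y, by rw [hg'.fderiv]; rfl⟩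
  exact ⟨hg.implicitFunction one_ne_zero hinv, hg.implicitFunction_apply_self one_ne_zero hinv,
    hg.contDiffAt_implicitFunction one_ne_zero hinv,
    hg.eventually_apply_eq_iff_implicitFunction one_ne_zero hinv⟩

theorem StraightenableAt.exists_graph [CompleteSpace X] [CompleteSpace Y]
    (h : StraightenableAt 1 N {w : X × Y | w.2 = 0} p) (hp : p ∈ N) :
    ∃ (L : (X × Y) ≃L[ℝ] E) (f : X → Y), f 0 = 0 ∧ ContDiffAt ℝ 1 f 0 ∧
      ∀ᶠ w in 𝓝 0, p + L w ∈ N ↔ f w.1 = w.2 := by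
  obtain ⟨U, V, φ, φ', hφ, hpU, himage⟩ := h
  have hmem : ∀ q ∈ U, q ∈ N ↔ (φ q).2 = 0 := hφ.image_inter_eq_iff.1 himage
  obtain ⟨A, hA⟩ := hφ.exists_hasFDerivAt_equiv hpU
  have hU_nhds : U ∈ 𝓝 p := hφ.1.mem_nhds hpU
  have hφ_at : ContDiffAt ℝ 1 φ p := hφ.2.2.1.contDiffAt hU_nhds
  let a : X × Y → E := fun w => p + A.symm w
  have ha : ContDiffAt ℝ 1 a 0 := by fun_prop
  have ha_zero : a 0 = p := by simp only [a, map_zero, add_zero]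
  rw [← ha_zero] at hA hφ_at hU_nhds
  have hg_deriv : HasFDerivAt (fun w => (φ (a w)).2) (ContinuousLinearMap.snd ℝ X Y) 0 := by
    refine (hA.comp 0 (A.symm.hasFDerivAt.const_add p)).snd.congr_fderiv ?_
    exact ContinuousLinearMap.ext fun w => congrArg Prod.snd (A.apply_symm_apply w)
  obtain ⟨f, hf_zero, hf, hgraph⟩ :=
    exists_implicitFunction_of_hasFDerivAt_snd (hφ_at.comp 0 ha).snd hg_deriv
  refine ⟨A.symm, f, hf_zero, hf, ?_⟩
  filter_upwards [ha.continuousAt.eventually hU_nhds, hgraph] with w hwU hw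
  rw [hmem _ hwU, ← hw, Function.comp_apply, Function.comp_apply, ha_zero, (hmem p hpU).1 hp]

end NormedSpace

variable [InnerProductSpace ℝ X] [FiniteDimensional ℝ X] [FiniteDimensional ℝ Y]

theorem CkHomogeneous.straightenableAt_of_eventually_graph (hk : 1 ≤ k) (h : CkHomogeneous k M)
    (hf : ContDiffAt ℝ 1 f x) (hM : ∀ᶠ w in 𝓝 (x, f x), w ∈ M ↔ f w.1 = w.2) :
    StraightenableAt k M {w : X × Y | w.2 = 0} (x, f x) := by
  have hgraph : ContinuousAt (fun z => (z, f z)) x := continuousAt_id.prodMk hf.continuousAt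
  obtain ⟨W, hW_sub, hW, hxW⟩ := _root_.eventually_nhds_iff.1
    ((hf.eventually (by simp)).and (hgraph.eventually (eventually_eventually_nhds.2 hM)))
  have hfW : ContDiffOn ℝ 1 f W := fun z hz => (hW_sub z hz).1.contDiffWithinAt
  have hhom : GraphHomogeneousOn k f W :=
    h.graphHomogeneousOn hW hfW.continuousOn fun z hz => (hW_sub z hz).2
  exact (straightenableAt_graph hW (hhom.contDiffOn hk hW hfW) hxW).congr_set
    (hM.mono fun _ hw => hw.symm)

theorem CkHomogeneous.straightenableAt (hk : 1 ≤ k) (h : CkHomogeneous k N)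
    (hstr : StraightenableAt 1 N {w : X × Y | w.2 = 0} p) (hp : p ∈ N) :
    StraightenableAt k N {w : X × Y | w.2 = 0} p := by
  obtain ⟨L, f, hf_zero, hf, hN⟩ := hstr.exists_graph hp
  have haff := isCkDiffeoOn_add_continuousLinearEquiv k p L
  have hbase : ((0 : X), f 0) = L.symm (p - p) := by rw [hf_zero, sub_self, map_zero]; rfl
  have hgraph := (h.preimage haff).straightenableAt_of_eventually_graph hk hf
    (by rw [hf_zero]; exact hN)
  rw [hbase] at hgraph
  convert StraightenableAt.preimage (q := p) hgraph haff.symm (mem_univ p) using 1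
  ext q
  simp only [mem_preimage, L.apply_symm_apply, add_sub_cancel]

end GraphChart

/-- The coordinate plane `ℝ^j × {0}` in `ℝ^d`. -/
def coordPlane (d j : ℕ) : Submodule ℝ (Euc d) where
  carrier := {x | ∀ i : Fin d, j ≤ (i : ℕ) → x i = 0}
  zero_mem' _ _ := rfl
  add_mem' hx hy i hi := by rw [PiLp.add_apply, hx i hi, hy i hi, add_zero]
  smul_mem' c x hx i hi := by rw [PiLp.smul_apply, hx i hi, smul_zero]

/-- **Theorem B.** For any integer `k ≥ 2`, any `C^k` homogeneous `C^1` submanifold of `ℝ^d`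
is a `C^k` submanifold. -/
theorem ck_homogeneous_c1_submanifold_is_ck (d k : ℕ) (hd : 1 ≤ d) (hk : 2 ≤ k)
    (N : Set (Euc d)) (h1 : IsCkSubmanifold 1 d N) (hhom : CkHomogeneous k N) :
    IsCkSubmanifold k d N := by
  intro p hp
  obtain ⟨U, V, φ, φ', j, hφ, hpU, himage⟩ := h1 p hp
  have hstr : StraightenableAt 1 N (coordPlane d j : Set (Euc d)) p :=
    ⟨U, V, φ, φ', hφ, hpU, himage⟩
  have hcompl : IsCompl (coordPlane d j) (coordPlane d j)ᗮ := Submodule.isCompl_orthogonal _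
  rw [straightenableAt_submodule_iff hcompl] at hstr
  have hstr_k := hhom.straightenableAt (one_le_two.trans hk) hstr hp
  rw [← straightenableAt_submodule_iff hcompl] at hstr_k
  obtain ⟨U', V', ψ, ψ', hψ, hpU', himage'⟩ := hstr_k
  exact ⟨U', V', ψ, ψ', j, hψ, hpU', himage'⟩
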